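/- Let H > 0, let Ω ⊆ ℝ² be an open connected set, and let u be a solution of (CMC) on Ω. Let z₀ ∈ ℝ² and let C be a nonempty relatively open arc of the circle S = {Q : |Q − z₀| = 1/(2H)} with C ⊆ ∂Ω, and suppose there is an open set V ⊇ C with Ω ∩ V contained in the open disk {Q : |Q − z₀| < 1/(2H)} (so C is a boundary arc of exterior curvature 2H). For 0 < ε < 1/(2H) and Q ∈ C set Q_ε = z₀ + (1 − 2Hε)(Q − z₀), and assume there is ε₀ > 0 such that Q_ε ∈ Ω for all Q ∈ C and 0 < ε < ε₀. Suppose that ω_u = ds along C, in the sense that for every compact subarc T ⊆ C one has lim_{ε→0⁺} ∫_{T_ε} ω_u = ℓ(T), where T_ε = {Q_ε : Q ∈ T} is oriented counterclockwise around z₀ and ℓ(T) denotes the length of T. Then u tends to +∞ at every point of C: for every P ∈ C and every M ∈ ℝ there exists δ > 0 such that u(Q) > M for all Q ∈ Ω with |Q − P| < δ. -/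

import Mathlib

/-!
Put `R = 1 / (2H)` and use polar coordinates `(θ, ρ)` around `z₀` with the radius `ρ` in units of
`R`, so that `C` lies on `ρ = 1`. The equation for `w = u / R` then says that the flux
`(q / W, ρ p / W)`, where `p = w_ρ`, `q = w_θ / ρ` and `W = √(1 + p² + q²)`, has divergence `ρ`.
The radial flux never exceeds `ρ`, and `ω_u = ds` along `C` says that its total deficit
`∫ (ρ - ρ p / W) dθ` over a subarc tends to `0` as `ρ → 1`.

Around the angle `a` of a point of `C` take the barrier `v = log φ - log (1 - ρ) / k` with
`φ = c² - (θ - a)² + k (ρ - (1 - 1 / k))²`. For small `c` and large `k` its flux has divergence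
larger than `ρ` where `φ > 0` and `1 - 1 / k ≤ ρ < 1`, and `v` tends to `-∞` where `φ` tends to `0`.
Choose `K` with `v ≤ w + K` on `ρ = 1 - 1 / k`. If `v > w + K` somewhere above this circle, multiply
the difference of the two fluxes by a smooth increasing cut-off of `v - w - K`. Because the flux is
a monotone function of the gradient, the resulting field has divergence `≥ 0`, and `> 0` at some
point. But the field vanishes on the other three sides, and its flux through a circle close to
`ρ = 1` is at most the deficit, which tends to `0`; this contradicts the divergence theorem.

Hence `w ≥ v - K`, and `v` tends to `+∞` at the point with `θ = a` and `ρ = 1`.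
-/

open Real MeasureTheory Filter Set

noncomputable section

/-- Euclidean norm on `ℝ × ℝ`. -/
def enorm2 (p : ℝ × ℝ) : ℝ := Real.sqrt (p.1 ^ 2 + p.2 ^ 2)

/-- Partial derivative in the `x` direction. -/
def pdx (u : ℝ × ℝ → ℝ) (p : ℝ × ℝ) : ℝ := fderiv ℝ u p (1, 0)

/-- Partial derivative in the `y` direction. -/
def pdy (u : ℝ × ℝ → ℝ) (p : ℝ × ℝ) : ℝ := fderiv ℝ u p (0, 1)

/-- The area element `W_u = √(1 + |∇u|²)`. -/
def Wgraph (u : ℝ × ℝ → ℝ) (p : ℝ × ℝ) : ℝ :=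
  Real.sqrt (1 + (pdx u p) ^ 2 + (pdy u p) ^ 2)

/-- Upward unit normal of the graph of `u`. -/
def normalVec (u : ℝ × ℝ → ℝ) (p : ℝ × ℝ) : ℝ × ℝ × ℝ :=
  (-pdx u p / Wgraph u p, -pdy u p / Wgraph u p, 1 / Wgraph u p)

/-- `u` is a (C²) solution of the constant mean curvature `H` equation on `Ω`. -/
def IsCMCSolution (H : ℝ) (Ω : Set (ℝ × ℝ)) (u : ℝ × ℝ → ℝ) : Prop :=
  ContDiffOn ℝ 2 u Ω ∧ ∀ p ∈ Ω,
    (1 + (pdy u p) ^ 2) * pdx (fun q => pdx u q) p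
      - 2 * (pdx u p) * (pdy u p) * pdy (fun q => pdx u q) p
      + (1 + (pdx u p) ^ 2) * pdy (fun q => pdy u q) p
    = 2 * H * (1 + (pdx u p) ^ 2 + (pdy u p) ^ 2) ^ ((3 : ℝ) / 2)

/-- `C` is a divergence line of the sequence `u` on `Ω`. -/
def IsDivergenceLine (H : ℝ) (Ω : Set (ℝ × ℝ)) (u : ℕ → ℝ × ℝ → ℝ)
    (C : Set (ℝ × ℝ)) : Prop :=
  ∃ z₁ : ℝ × ℝ, C ⊆ Ω ∧ (∀ q ∈ C, enorm2 (q - z₁) = 1 / (2 * H)) ∧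
    IsConnected C ∧ C.Nontrivial ∧
    ∃ φ : ℕ → ℕ, StrictMono φ ∧ ∀ Q ∈ C,
      Tendsto (fun n => normalVec (u (φ n)) Q) atTop
        (nhds (2 * H * (z₁.1 - Q.1), 2 * H * (z₁.2 - Q.2), 0))

open scoped Topology

/-! ### Partial derivatives and plane fields -/

section PartialDerivatives

variable {F G : ℝ × ℝ → ℝ} {p : ℝ × ℝ}

lemma fderiv_apply_eq_pdx_add_pdy (F : ℝ × ℝ → ℝ) (p v : ℝ × ℝ) :
    fderiv ℝ F p v = v.1 * pdx F p + v.2 * pdy F p := by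
  have hv : v = v.1 • (1, 0) + v.2 • (0, 1) := by simp
  conv_lhs => rw [hv, map_add, map_smul, map_smul]
  rfl

lemma hasDerivAt_comp_curve {γ : ℝ → ℝ × ℝ} {γ' : ℝ × ℝ} {t : ℝ}
    (hF : DifferentiableAt ℝ F (γ t)) (hγ : HasDerivAt γ γ' t) :
    HasDerivAt (fun s => F (γ s)) (γ'.1 * pdx F (γ t) + γ'.2 * pdy F (γ t)) t := by
  rw [← fderiv_apply_eq_pdx_add_pdy]
  exact hF.hasFDerivAt.comp_hasDerivAt t hγ

lemma hasDerivAt_pdx (hF : DifferentiableAt ℝ F p) :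
    HasDerivAt (fun s => F (s, p.2)) (pdx F p) p.1 := by
  simpa using hasDerivAt_comp_curve (γ := fun s => (s, p.2)) hF
    ((hasDerivAt_id p.1).prodMk (hasDerivAt_const p.1 p.2))

lemma hasDerivAt_pdy (hF : DifferentiableAt ℝ F p) :
    HasDerivAt (fun s => F (p.1, s)) (pdy F p) p.2 := by
  simpa using hasDerivAt_comp_curve (γ := fun s => (p.1, s)) hF
    ((hasDerivAt_const p.2 p.1).prodMk (hasDerivAt_id p.2))

lemma pdx_eq_of_hasDerivAt {a : ℝ} (hF : DifferentiableAt ℝ F p)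
    (h : HasDerivAt (fun s => F (s, p.2)) a p.1) : pdx F p = a :=
  (hasDerivAt_pdx hF).unique h

lemma pdy_eq_of_hasDerivAt {a : ℝ} (hF : DifferentiableAt ℝ F p)
    (h : HasDerivAt (fun s => F (p.1, s)) a p.2) : pdy F p = a :=
  (hasDerivAt_pdy hF).unique h

lemma pdx_congr (h : F =ᶠ[𝓝 p] G) : pdx F p = pdx G p := by
  rw [pdx, pdx, h.fderiv_eq]

lemma pdy_congr (h : F =ᶠ[𝓝 p] G) : pdy F p = pdy G p := by
  rw [pdy, pdy, h.fderiv_eq]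

lemma contDiffAt_pdx (h : ContDiffAt ℝ 2 F p) : ContDiffAt ℝ 1 (pdx F) p :=
  (h.fderiv_right (m := 1) (by norm_num)).clm_apply contDiffAt_const

lemma contDiffAt_pdy (h : ContDiffAt ℝ 2 F p) : ContDiffAt ℝ 1 (pdy F) p :=
  (h.fderiv_right (m := 1) (by norm_num)).clm_apply contDiffAt_const

lemma pdx_pdy_comm (h : ContDiffAt ℝ 2 F p) : pdx (pdy F) p = pdy (pdx F) p := by
  have hd : DifferentiableAt ℝ (fderiv ℝ F) p :=
    (h.fderiv_right (m := 1) (by norm_num)).differentiableAt (by norm_num)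
  have second_derivative (v w : ℝ × ℝ) :
      fderiv ℝ (fun q => fderiv ℝ F q v) p w = fderiv ℝ (fderiv ℝ F) p w v := by
    rw [fderiv_clm_apply hd (differentiableAt_const _)]
    simp
  have symm : IsSymmSndFDerivAt ℝ F p := h.isSymmSndFDerivAt (by simp)
  exact (second_derivative _ _).trans ((symm.eq _ _).trans (second_derivative _ _).symm)

/-- The divergence of the plane field `(F₁, F₂)`. -/
def planeDiv (F₁ F₂ : ℝ × ℝ → ℝ) (p : ℝ × ℝ) : ℝ := pdx F₁ p + pdy F₂ p

lemma continuousAt_planeDiv (hF : ContDiffAt ℝ 1 F p) (hG : ContDiffAt ℝ 1 G p) :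
    ContinuousAt (planeDiv F G) p :=
  ((hF.fderiv_right (m := 0) (by norm_num)).continuousAt.clm_apply continuousAt_const).add
    ((hG.fderiv_right (m := 0) (by norm_num)).continuousAt.clm_apply continuousAt_const)

end PartialDerivatives

/-! ### The flux of a gradient -/

section AreaFlux

/-- The first component of the vector `(p, q) / √(1 + p² + q²)`, the flux through a vertical plane
of a graph with gradient `(p, q)`; the second component is `areaFlux q p`. -/
def areaFlux (p q : ℝ) : ℝ := p / √(1 + p ^ 2 + q ^ 2)

lemma areaFlux_le_one (p q : ℝ) : areaFlux p q ≤ 1 :=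
  div_le_one_of_le₀ (Real.le_sqrt_of_sq_le (by nlinarith)) (Real.sqrt_nonneg _)

/-- `(p, q) ↦ (p, q) / √(1 + p² + q²)` is the gradient of the convex function `√(1 + p² + q²)`. -/
lemma areaFlux_monotone (p q p' q' : ℝ) :
    0 ≤ (p - p') * (areaFlux p q - areaFlux p' q')
      + (q - q') * (areaFlux q p - areaFlux q' p') := by
  simp only [areaFlux, add_right_comm 1 (q ^ 2), add_right_comm 1 (q' ^ 2)]
  have hW : 0 < √(1 + p ^ 2 + q ^ 2) := Real.sqrt_pos.2 (by positivity)
  have hW' : 0 < √(1 + p' ^ 2 + q' ^ 2) := Real.sqrt_pos.2 (by positivity)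
  have sq_W : √(1 + p ^ 2 + q ^ 2) ^ 2 = 1 + p ^ 2 + q ^ 2 := Real.sq_sqrt (by positivity)
  have sq_W' : √(1 + p' ^ 2 + q' ^ 2) ^ 2 = 1 + p' ^ 2 + q' ^ 2 := Real.sq_sqrt (by positivity)
  set W := √(1 + p ^ 2 + q ^ 2)
  set W' := √(1 + p' ^ 2 + q' ^ 2)
  have cauchy_schwarz : 1 + p * p' + q * q' ≤ W * W' := by
    refine le_of_sq_le_sq ?_ (by positivity)
    rw [mul_pow, sq_W, sq_W']
    nlinarith [sq_nonneg (p - p'), sq_nonneg (q - q'), sq_nonneg (p * q' - q * p')]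
  calc 0 ≤ (W * W' - (1 + p * p' + q * q')) * (1 / W + 1 / W') :=
        mul_nonneg (sub_nonneg.2 cauchy_schwarz) (by positivity)
    _ = _ := by
        field_simp
        linear_combination W' * sq_W + W * sq_W'

lemma hasDerivAt_areaFlux {p q : ℝ → ℝ} {p' q' x : ℝ} (hp : HasDerivAt p p' x)
    (hq : HasDerivAt q q' x) :
    HasDerivAt (fun s => areaFlux (p s) (q s))
      ((p' * (1 + q x ^ 2) - p x * q x * q') / √(1 + p x ^ 2 + q x ^ 2) ^ 3) x := by
  have pos : 0 < 1 + p x ^ 2 + q x ^ 2 := by positivity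
  have hrad : HasDerivAt (fun s => 1 + p s ^ 2 + q s ^ 2) (2 * p x * p' + 2 * q x * q') x :=
    (((hp.pow 2).const_add 1).add (hq.pow 2)).congr_deriv (by push_cast; ring)
  refine (hp.div (hrad.sqrt pos.ne') (Real.sqrt_pos.2 pos).ne').congr_deriv ?_
  have sq_W : √(1 + p x ^ 2 + q x ^ 2) ^ 2 = 1 + p x ^ 2 + q x ^ 2 := Real.sq_sqrt pos.le
  have hW : 0 < √(1 + p x ^ 2 + q x ^ 2) := Real.sqrt_pos.2 pos
  set W := √(1 + p x ^ 2 + q x ^ 2)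
  field_simp
  linear_combination p' * sq_W

lemma contDiffAt_areaFlux {E : Type*} [NormedAddCommGroup E] [NormedSpace ℝ E]
    {n : WithTop ℕ∞} {f g : E → ℝ} {x : E} (hf : ContDiffAt ℝ n f x) (hg : ContDiffAt ℝ n g x) :
    ContDiffAt ℝ n (fun y => areaFlux (f y) (g y)) x := by
  have hpos : 0 < 1 + f x ^ 2 + g x ^ 2 := by positivity
  exact hf.div (((contDiffAt_const.add (hf.pow 2)).add (hg.pow 2)).sqrt hpos.ne')
    (Real.sqrt_pos.2 hpos).ne'

end AreaFlux

/-! ### The divergence form of the equation -/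

section DivergenceForm

variable {H : ℝ} {Ω : Set (ℝ × ℝ)} {u : ℝ × ℝ → ℝ} {p : ℝ × ℝ}

/-- First component of the flux field `∇u / W_u`. -/
def fluxX (u : ℝ × ℝ → ℝ) (p : ℝ × ℝ) : ℝ := areaFlux (pdx u p) (pdy u p)

/-- Second component of the flux field `∇u / W_u`. -/
def fluxY (u : ℝ × ℝ → ℝ) (p : ℝ × ℝ) : ℝ := areaFlux (pdy u p) (pdx u p)

lemma contDiffAt_fluxX (h : ContDiffAt ℝ 2 u p) : ContDiffAt ℝ 1 (fluxX u) p :=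
  contDiffAt_areaFlux (contDiffAt_pdx h) (contDiffAt_pdy h)

lemma contDiffAt_fluxY (h : ContDiffAt ℝ 2 u p) : ContDiffAt ℝ 1 (fluxY u) p :=
  contDiffAt_areaFlux (contDiffAt_pdy h) (contDiffAt_pdx h)

lemma planeDiv_flux (h : ContDiffAt ℝ 2 u p) :
    planeDiv (fluxX u) (fluxY u) p =
      ((1 + pdy u p ^ 2) * pdx (pdx u) p - 2 * pdx u p * pdy u p * pdy (pdx u) p
        + (1 + pdx u p ^ 2) * pdy (pdy u) p) / Wgraph u p ^ 3 := by
  have dx := (contDiffAt_pdx h).differentiableAt one_ne_zero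
  have dy := (contDiffAt_pdy h).differentiableAt one_ne_zero
  have hx := pdx_eq_of_hasDerivAt ((contDiffAt_fluxX h).differentiableAt one_ne_zero)
    (hasDerivAt_areaFlux (hasDerivAt_pdx dx) (hasDerivAt_pdx dy))
  have hy := pdy_eq_of_hasDerivAt ((contDiffAt_fluxY h).differentiableAt one_ne_zero)
    (hasDerivAt_areaFlux (hasDerivAt_pdy dy) (hasDerivAt_pdy dx))
  rw [planeDiv, hx, hy, pdx_pdy_comm h, Wgraph, add_right_comm 1 (pdy u _ ^ 2), ← add_div]
  ring

lemma planeDiv_flux_of_isCMCSolution (hΩ : IsOpen Ω) (hu : IsCMCSolution H Ω u) (hp : p ∈ Ω) :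
    planeDiv (fluxX u) (fluxY u) p = 2 * H := by
  have rpow_three_halves {x : ℝ} (hx : 0 < x) : x ^ ((3 : ℝ) / 2) = √x ^ 3 := by
    rw [Real.sqrt_eq_rpow, ← Real.rpow_natCast, ← Real.rpow_mul hx.le]
    norm_num
  have pos : 0 < 1 + pdx u p ^ 2 + pdy u p ^ 2 := by positivity
  rw [planeDiv_flux (hu.1.contDiffAt (hΩ.mem_nhds hp)), hu.2 p hp, rpow_three_halves pos]
  exact mul_div_cancel_right₀ _ (pow_pos (Real.sqrt_pos.2 pos) 3).ne'

end DivergenceForm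

/-! ### Polar coordinates -/

section PolarCoordinates

/-- The point with polar coordinates `q = (θ, ρ)` around `z₀`, the radius `ρ` being measured in
units of `R`. -/
def polarPt (z₀ : ℝ × ℝ) (R : ℝ) (q : ℝ × ℝ) : ℝ × ℝ :=
  z₀ + (R * q.2) • ((Real.cos q.1, Real.sin q.1) : ℝ × ℝ)

variable {z₀ P : ℝ × ℝ} {R : ℝ} {q : ℝ × ℝ}

lemma contDiff_polarPt {n : WithTop ℕ∞} (z₀ : ℝ × ℝ) (R : ℝ) : ContDiff ℝ n (polarPt z₀ R) := by
  unfold polarPt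
  fun_prop

lemma enorm2_polarPt_sub (z₀ : ℝ × ℝ) (R : ℝ) (q : ℝ × ℝ) :
    enorm2 (polarPt z₀ R q - z₀) = |R * q.2| := by
  rw [polarPt, add_sub_cancel_left, enorm2, ← Real.sqrt_sq_eq_abs]
  congr 1
  simp only [Prod.smul_mk, smul_eq_mul]
  linear_combination (R * q.2) ^ 2 * sin_sq_add_cos_sq q.1

lemma exists_eq_polarPt_one (h : enorm2 (P - z₀) = R) : ∃ a, P = polarPt z₀ R (a, 1) := by
  set w : ℂ := ⟨P.1 - z₀.1, P.2 - z₀.2⟩ with hw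
  have norm_w : ‖w‖ = R := by
    rw [Complex.norm_def, Complex.normSq_mk, ← h, enorm2, ← pow_two, ← pow_two]
    rfl
  have re_w := Complex.norm_mul_cos_arg w
  have im_w := Complex.norm_mul_sin_arg w
  rw [norm_w] at re_w im_w
  exact ⟨w.arg, Prod.ext (by simp [polarPt, re_w]; simp [hw]) (by simp [polarPt, im_w]; simp [hw])⟩

lemma hasDerivAt_polarPt_angle (z₀ : ℝ × ℝ) (R : ℝ) (q : ℝ × ℝ) :
    HasDerivAt (fun s => polarPt z₀ R (s, q.2))
      ((R * q.2) • ((-sin q.1, cos q.1) : ℝ × ℝ)) q.1 :=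
  (((hasDerivAt_cos q.1).prodMk (hasDerivAt_sin q.1)).const_smul (R * q.2)).const_add z₀

lemma hasDerivAt_polarPt_radius (z₀ : ℝ × ℝ) (R : ℝ) (q : ℝ × ℝ) :
    HasDerivAt (fun s => polarPt z₀ R (q.1, s)) (R • ((cos q.1, sin q.1) : ℝ × ℝ)) q.2 :=
  (((hasDerivAt_const_mul R).smul_const ((cos q.1, sin q.1) : ℝ × ℝ)).const_add z₀)

lemma map_polarPt_nhds (z₀ : ℝ × ℝ) (hR : R ≠ 0) (hq : q.2 ≠ 0) :
    map (polarPt z₀ R) (𝓝 q) = 𝓝 (polarPt z₀ R q) := by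
  have strict : HasStrictFDerivAt (polarPt z₀ R) (fderiv ℝ (polarPt z₀ R) q) q :=
    (contDiff_polarPt (n := 1) z₀ R).contDiffAt.hasStrictFDerivAt one_ne_zero
  have d_angle := (hasDerivAt_polarPt_angle z₀ R q).unique
    (HasFDerivAt.comp_hasDerivAt (l := polarPt z₀ R) q.1 strict.hasFDerivAt
      ((hasDerivAt_id q.1).prodMk (hasDerivAt_const q.1 q.2)))
  have d_radius := (hasDerivAt_polarPt_radius z₀ R q).unique
    (HasFDerivAt.comp_hasDerivAt (l := polarPt z₀ R) q.2 strict.hasFDerivAt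
      ((hasDerivAt_const q.2 q.1).prodMk (hasDerivAt_id q.2)))
  refine strict.map_nhds_eq_of_surj (LinearMap.range_eq_top.2 fun w => ?_)
  -- the components of `w` in the angular and radial directions
  refine ⟨((-sin q.1 * w.1 + cos q.1 * w.2) / (R * q.2)) • (1, 0)
    + ((cos q.1 * w.1 + sin q.1 * w.2) / R) • (0, 1), ?_⟩
  simp only [ContinuousLinearMap.coe_coe, map_add, map_smul, ← d_angle, ← d_radius]
  have trig := sin_sq_add_cos_sq q.1
  ext
  · simp only [Prod.fst_add, Prod.smul_fst, smul_eq_mul]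
    field_simp
    linear_combination w.1 * trig
  · simp only [Prod.snd_add, Prod.smul_snd, smul_eq_mul]
    field_simp
    linear_combination w.2 * trig

variable {F : ℝ × ℝ → ℝ}

lemma differentiableAt_comp_polarPt (hF : DifferentiableAt ℝ F (polarPt z₀ R q)) :
    DifferentiableAt ℝ (fun q => F (polarPt z₀ R q)) q :=
  hF.comp q ((contDiff_polarPt (n := 1) z₀ R).differentiable one_ne_zero q)

lemma pdx_comp_polarPt (hF : DifferentiableAt ℝ F (polarPt z₀ R q)) :
    pdx (fun q => F (polarPt z₀ R q)) q
    = R * q.2 * (cos q.1 * pdy F (polarPt z₀ R q) - sin q.1 * pdx F (polarPt z₀ R q)) := by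
  rw [pdx_eq_of_hasDerivAt (differentiableAt_comp_polarPt hF)
    (hasDerivAt_comp_curve (γ := fun s => polarPt z₀ R (s, q.2)) hF
      (hasDerivAt_polarPt_angle z₀ R q))]
  simp only [Prod.mk.eta, Prod.smul_mk, smul_eq_mul]
  ring

lemma pdy_comp_polarPt (hF : DifferentiableAt ℝ F (polarPt z₀ R q)) :
    pdy (fun q => F (polarPt z₀ R q)) q
    = R * (cos q.1 * pdx F (polarPt z₀ R q) + sin q.1 * pdy F (polarPt z₀ R q)) := by
  rw [pdy_eq_of_hasDerivAt (differentiableAt_comp_polarPt hF)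
    (hasDerivAt_comp_curve (γ := fun s => polarPt z₀ R (q.1, s)) hF
      (hasDerivAt_polarPt_radius z₀ R q))]
  simp only [Prod.mk.eta, Prod.smul_mk, smul_eq_mul]
  ring

/-- The factor is `R * ρ` rather than `ρ` because `ρ` is measured in units of `R`. -/
lemma planeDiv_polar {X Y : ℝ × ℝ → ℝ} (hX : DifferentiableAt ℝ X (polarPt z₀ R q))
    (hY : DifferentiableAt ℝ Y (polarPt z₀ R q)) :
    planeDiv (fun q => cos q.1 * Y (polarPt z₀ R q) - sin q.1 * X (polarPt z₀ R q))
      (fun q => q.2 * (cos q.1 * X (polarPt z₀ R q) + sin q.1 * Y (polarPt z₀ R q))) q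
      = R * q.2 * planeDiv X Y (polarPt z₀ R q) := by
  have hXP := differentiableAt_comp_polarPt hX
  have hYP := differentiableAt_comp_polarPt hY
  have d_angle := pdx_eq_of_hasDerivAt (F := fun q => cos q.1 * Y (polarPt z₀ R q)
      - sin q.1 * X (polarPt z₀ R q))
    ((differentiableAt_fst.cos.mul hYP).sub (differentiableAt_fst.sin.mul hXP))
    (((hasDerivAt_cos q.1).mul (hasDerivAt_pdx hYP)).sub
      ((hasDerivAt_sin q.1).mul (hasDerivAt_pdx hXP)))
  have d_radius := pdy_eq_of_hasDerivAt (F := fun q => q.2 * (cos q.1 * X (polarPt z₀ R q)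
      + sin q.1 * Y (polarPt z₀ R q)))
    (differentiableAt_snd.mul ((differentiableAt_fst.cos.mul hXP).add
      (differentiableAt_fst.sin.mul hYP)))
    ((hasDerivAt_id q.2).mul (((hasDerivAt_pdy hXP).const_mul (cos q.1)).add
      ((hasDerivAt_pdy hYP).const_mul (sin q.1))))
  rw [planeDiv, d_angle, d_radius, planeDiv, pdx_comp_polarPt hX, pdx_comp_polarPt hY,
    pdy_comp_polarPt hX, pdy_comp_polarPt hY]
  simp only [id, Prod.mk.eta]
  linear_combination
    R * q.2 * (pdx X (polarPt z₀ R q) + pdy Y (polarPt z₀ R q)) * sin_sq_add_cos_sq q.1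

end PolarCoordinates

/-! ### The flux field in polar coordinates -/

section PolarFlux

/-- `ρ` times the radial component of the flux field of the graph of `v`, for a function `v` of
polar coordinates `(θ, ρ)`. -/
def radialFlux (v : ℝ × ℝ → ℝ) (q : ℝ × ℝ) : ℝ := q.2 * areaFlux (pdy v q) (pdx v q / q.2)

/-- The angular component of the flux field of the graph of `v`, for a function `v` of polar
coordinates `(θ, ρ)`. -/
def angularFlux (v : ℝ × ℝ → ℝ) (q : ℝ × ℝ) : ℝ := areaFlux (pdx v q / q.2) (pdy v q)

/-- `ρ` times the divergence of the flux field of the graph of `v`, for a function `v` of polar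
coordinates `(θ, ρ)`. -/
def polarFluxDiv (v : ℝ × ℝ → ℝ) : ℝ × ℝ → ℝ := planeDiv (angularFlux v) (radialFlux v)

variable {v w : ℝ × ℝ → ℝ} {q : ℝ × ℝ}

lemma radialFlux_le (hq : 0 ≤ q.2) : radialFlux v q ≤ q.2 :=
  mul_le_of_le_one_right hq (areaFlux_le_one _ _)

lemma contDiffAt_radialFlux (hv : ContDiffAt ℝ 2 v q) (hq : q.2 ≠ 0) :
    ContDiffAt ℝ 1 (radialFlux v) q :=
  contDiffAt_snd.mul
    (contDiffAt_areaFlux (contDiffAt_pdy hv) ((contDiffAt_pdx hv).div contDiffAt_snd hq))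

lemma contDiffAt_angularFlux (hv : ContDiffAt ℝ 2 v q) (hq : q.2 ≠ 0) :
    ContDiffAt ℝ 1 (angularFlux v) q :=
  contDiffAt_areaFlux ((contDiffAt_pdx hv).div contDiffAt_snd hq) (contDiffAt_pdy hv)

lemma polarFlux_monotone (v w : ℝ × ℝ → ℝ) (hq : 0 < q.2) :
    0 ≤ (pdx v q - pdx w q) * (angularFlux v q - angularFlux w q)
      + (pdy v q - pdy w q) * (radialFlux v q - radialFlux w q) := by
  refine (mul_nonneg hq.le
    (areaFlux_monotone (pdx v q / q.2) (pdy v q) (pdx w q / q.2) (pdy w q))).trans_eq ?_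
  simp only [angularFlux, radialFlux]
  field_simp

lemma polarFluxDiv_eq (hv : ContDiffAt ℝ 2 v q) (hq : q.2 ≠ 0) :
    polarFluxDiv v q =
      ((q.2 ^ 2 + pdx v q ^ 2) * pdy (pdy v) q + 2 * pdy v q * pdx v q ^ 2 / q.2
        - 2 * pdy v q * pdx v q * pdy (pdx v) q
        + (1 + pdy v q ^ 2) * (pdx (pdx v) q + q.2 * pdy v q))
      / (q.2 * √(1 + pdy v q ^ 2 + (pdx v q / q.2) ^ 2) ^ 3) := by
  have dx := (contDiffAt_pdx hv).differentiableAt one_ne_zero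
  have dy := (contDiffAt_pdy hv).differentiableAt one_ne_zero
  have d_angle := pdx_eq_of_hasDerivAt ((contDiffAt_angularFlux hv hq).differentiableAt one_ne_zero)
    (hasDerivAt_areaFlux ((hasDerivAt_pdx dx).div_const q.2) (hasDerivAt_pdx dy))
  have d_radius := pdy_eq_of_hasDerivAt
    ((contDiffAt_radialFlux hv hq).differentiableAt one_ne_zero)
    ((hasDerivAt_id q.2).mul (hasDerivAt_areaFlux (hasDerivAt_pdy dy)
      ((hasDerivAt_pdy dx).div (hasDerivAt_id q.2) hq)))
  have pos : 0 < 1 + pdy v q ^ 2 + (pdx v q / q.2) ^ 2 := by positivity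
  rw [polarFluxDiv, planeDiv, d_angle, d_radius, pdx_pdy_comm hv]
  simp only [areaFlux, id, Prod.mk.eta, add_right_comm 1 ((pdx v q / q.2) ^ 2)]
  have sq_W := Real.sq_sqrt pos.le
  have hW := Real.sqrt_pos.2 pos
  set W := √(1 + pdy v q ^ 2 + (pdx v q / q.2) ^ 2)
  field_simp at sq_W ⊢
  linear_combination pdy v q * sq_W

/-- The function `u` in polar coordinates around `z₀`, with all lengths measured in units of `R`. -/
def polarGraph (z₀ : ℝ × ℝ) (R : ℝ) (u : ℝ × ℝ → ℝ) (q : ℝ × ℝ) : ℝ := u (polarPt z₀ R q) / R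

variable {z₀ : ℝ × ℝ} {R H : ℝ} {Ω : Set (ℝ × ℝ)} {u : ℝ × ℝ → ℝ}

lemma differentiableAt_polarGraph (hu : DifferentiableAt ℝ u (polarPt z₀ R q)) :
    DifferentiableAt ℝ (polarGraph z₀ R u) q := by
  unfold polarGraph
  simpa only [div_eq_mul_inv] using (differentiableAt_comp_polarPt hu).mul_const R⁻¹

lemma contDiffAt_polarGraph {n : WithTop ℕ∞} (hu : ContDiffAt ℝ n u (polarPt z₀ R q)) :
    ContDiffAt ℝ n (polarGraph z₀ R u) q :=
  (hu.comp q (contDiff_polarPt z₀ R).contDiffAt).div_const R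

lemma pdx_polarGraph (hR : R ≠ 0) (hu : DifferentiableAt ℝ u (polarPt z₀ R q)) :
    pdx (polarGraph z₀ R u) q
      = q.2 * (cos q.1 * pdy u (polarPt z₀ R q) - sin q.1 * pdx u (polarPt z₀ R q)) := by
  have hP := differentiableAt_comp_polarPt hu
  rw [pdx_eq_of_hasDerivAt (differentiableAt_polarGraph hu) ((hasDerivAt_pdx hP).div_const R),
    pdx_comp_polarPt hu]
  field_simp

lemma pdy_polarGraph (hR : R ≠ 0) (hu : DifferentiableAt ℝ u (polarPt z₀ R q)) :
    pdy (polarGraph z₀ R u) q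
      = cos q.1 * pdx u (polarPt z₀ R q) + sin q.1 * pdy u (polarPt z₀ R q) := by
  have hP := differentiableAt_comp_polarPt hu
  rw [pdy_eq_of_hasDerivAt (differentiableAt_polarGraph hu) ((hasDerivAt_pdy hP).div_const R),
    pdy_comp_polarPt hu, mul_div_cancel_left₀ _ hR]

lemma areaFlux_rotate {c s : ℝ} (h : c ^ 2 + s ^ 2 = 1) (x y : ℝ) :
    areaFlux (c * x + s * y) (c * y - s * x) = c * areaFlux x y + s * areaFlux y x := by
  have norm_sq : 1 + (c * x + s * y) ^ 2 + (c * y - s * x) ^ 2 = 1 + x ^ 2 + y ^ 2 := by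
    linear_combination (x ^ 2 + y ^ 2) * h
  rw [areaFlux, areaFlux, areaFlux, norm_sq, add_right_comm 1 (y ^ 2)]
  ring

lemma radialFlux_polarGraph (hR : R ≠ 0) (hq : q.2 ≠ 0)
    (hu : DifferentiableAt ℝ u (polarPt z₀ R q)) :
    radialFlux (polarGraph z₀ R u) q = q.2 *
      (cos q.1 * fluxX u (polarPt z₀ R q) + sin q.1 * fluxY u (polarPt z₀ R q)) := by
  rw [radialFlux, pdx_polarGraph hR hu, pdy_polarGraph hR hu, mul_div_cancel_left₀ _ hq,
    areaFlux_rotate (cos_sq_add_sin_sq q.1)]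
  rfl

lemma angularFlux_polarGraph (hR : R ≠ 0) (hq : q.2 ≠ 0)
    (hu : DifferentiableAt ℝ u (polarPt z₀ R q)) :
    angularFlux (polarGraph z₀ R u) q =
      cos q.1 * fluxY u (polarPt z₀ R q) - sin q.1 * fluxX u (polarPt z₀ R q) := by
  have rotate := areaFlux_rotate (c := cos q.1) (s := -sin q.1)
    (by rw [neg_sq, cos_sq_add_sin_sq]) (pdy u (polarPt z₀ R q)) (pdx u (polarPt z₀ R q))
  simp only [neg_mul, sub_neg_eq_add, ← sub_eq_add_neg] at rotate
  rw [angularFlux, pdx_polarGraph hR hu, pdy_polarGraph hR hu, mul_div_cancel_left₀ _ hq, rotate]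
  rfl

lemma polarFluxDiv_polarGraph (hR : R ≠ 0) (hq : q.2 ≠ 0)
    (hu : ContDiffAt ℝ 2 u (polarPt z₀ R q)) :
    polarFluxDiv (polarGraph z₀ R u) q
      = R * q.2 * planeDiv (fluxX u) (fluxY u) (polarPt z₀ R q) := by
  have near : ∀ᶠ p in 𝓝 q, p.2 ≠ 0 ∧ DifferentiableAt ℝ u (polarPt z₀ R p) :=
    (continuousAt_snd.eventually_ne hq).and
      ((contDiff_polarPt (n := 0) z₀ R).continuous.continuousAt.eventually
        ((hu.eventually (by simp)).mono fun p hp => hp.differentiableAt two_ne_zero))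
  rw [← planeDiv_polar ((contDiffAt_fluxX hu).differentiableAt one_ne_zero)
    ((contDiffAt_fluxY hu).differentiableAt one_ne_zero), polarFluxDiv, planeDiv, planeDiv,
    pdx_congr (near.mono fun p hp => angularFlux_polarGraph hR hp.1 hp.2),
    pdy_congr (near.mono fun p hp => radialFlux_polarGraph hR hp.1 hp.2)]

lemma radialFlux_add_const (w : ℝ × ℝ → ℝ) (K : ℝ) :
    radialFlux (fun p => w p + K) = radialFlux w := by
  funext p
  simp only [radialFlux, pdx, pdy, fderiv_add_const]

lemma angularFlux_add_const (w : ℝ × ℝ → ℝ) (K : ℝ) :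
    angularFlux (fun p => w p + K) = angularFlux w := by
  funext p
  simp only [angularFlux, pdx, pdy, fderiv_add_const]

lemma polarFluxDiv_add_const (w : ℝ × ℝ → ℝ) (K : ℝ) :
    polarFluxDiv (fun p => w p + K) = polarFluxDiv w := by
  rw [polarFluxDiv, polarFluxDiv, angularFlux_add_const, radialFlux_add_const]

end PolarFlux

/-! ### The divergence theorem up to an open side -/

section OpenSide

lemma setIntegral_pos_of_mem_nhds {X : Type*} [TopologicalSpace X] [MeasurableSpace X]
    {μ : Measure X} [μ.IsOpenPosMeasure] {f : X → ℝ} {S : Set X} {x : X} (hS : MeasurableSet S)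
    (hf : IntegrableOn f S μ) (f_nonneg : ∀ y ∈ S, 0 ≤ f y) (hxS : S ∈ 𝓝 x)
    (hfx : ContinuousAt f x) (hpos : 0 < f x) : 0 < ∫ y in S, f y ∂μ := by
  rw [setIntegral_pos_iff_support_of_nonneg_ae (ae_restrict_of_forall_mem hS f_nonneg) hf]
  have near : {y | 0 < f y} ∩ S ∈ 𝓝 x := inter_mem (hfx.eventually (lt_mem_nhds hpos)) hxS
  exact (μ.measure_pos_of_mem_nhds near).trans_le
    (measure_mono (inter_subset_inter_left _ fun y (hy : 0 < f y) => hy.ne'))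

variable {F₁ F₂ : ℝ × ℝ → ℝ} {x₀ x₁ y₀ y₁ : ℝ}

lemma integrableOn_planeDiv {K : Set (ℝ × ℝ)} (hK : IsCompact K)
    (hF₁ : ∀ q ∈ K, ContDiffAt ℝ 1 F₁ q) (hF₂ : ∀ q ∈ K, ContDiffAt ℝ 1 F₂ q) :
    IntegrableOn (planeDiv F₁ F₂) K :=
  ContinuousOn.integrableOn_compact hK fun q hq =>
    (continuousAt_planeDiv (hF₁ q hq) (hF₂ q hq)).continuousWithinAt

lemma setIntegral_planeDiv_eq_integral_top (hx : x₀ ≤ x₁) (hy : y₀ ≤ y₁)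
    (hF₁ : ∀ q ∈ Icc (x₀, y₀) (x₁, y₁), ContDiffAt ℝ 1 F₁ q)
    (hF₂ : ∀ q ∈ Icc (x₀, y₀) (x₁, y₁), ContDiffAt ℝ 1 F₂ q)
    (left : ∀ y ∈ Icc y₀ y₁, F₁ (x₀, y) = 0) (right : ∀ y ∈ Icc y₀ y₁, F₁ (x₁, y) = 0)
    (bottom : ∀ x ∈ Icc x₀ x₁, F₂ (x, y₀) = 0) :
    ∫ q in Icc (x₀, y₀) (x₁, y₁), planeDiv F₁ F₂ q = ∫ x in x₀..x₁, F₂ (x, y₁) := by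
  have interior : Ioo x₀ x₁ ×ˢ Ioo y₀ y₁ ⊆ Icc (x₀, y₀) (x₁, y₁) := fun q hq =>
    ⟨⟨hq.1.1.le, hq.2.1.le⟩, hq.1.2.le, hq.2.2.le⟩
  have divergence_theorem := integral_divergence_prod_Icc_of_hasFDerivAt_of_le F₁ F₂
    (fderiv ℝ F₁) (fderiv ℝ F₂) (x₀, y₀) (x₁, y₁) ⟨hx, hy⟩
    (fun q hq => (hF₁ q hq).continuousAt.continuousWithinAt)
    (fun q hq => (hF₂ q hq).continuousAt.continuousWithinAt)
    (fun q hq => ((hF₁ q (interior hq)).differentiableAt one_ne_zero).hasFDerivAt)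
    (fun q hq => ((hF₂ q (interior hq)).differentiableAt one_ne_zero).hasFDerivAt)
    (integrableOn_planeDiv isCompact_Icc hF₁ hF₂)
  have integral_eq_zero {f : ℝ → ℝ} {s t : ℝ} (hst : s ≤ t) (hf : ∀ x ∈ Icc s t, f x = 0) :
      ∫ x in s..t, f x = 0 := by
    rw [intervalIntegral.integral_congr (g := fun _ => (0 : ℝ)) (by rwa [uIcc_of_le hst]),
      intervalIntegral.integral_zero]
  rw [integral_eq_zero hx bottom, integral_eq_zero hy left, integral_eq_zero hy right, sub_zero,
    sub_zero, add_zero] at divergence_theorem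
  exact divergence_theorem

lemma setIntegral_planeDiv_le_integral_top {s : ℝ} (hx : x₀ ≤ x₁) (hs : y₀ ≤ s) (hs₁ : s ≤ y₁)
    (hF₁ : ∀ q ∈ Icc (x₀, y₀) (x₁, y₁), ContDiffAt ℝ 1 F₁ q)
    (hF₂ : ∀ q ∈ Icc (x₀, y₀) (x₁, y₁), ContDiffAt ℝ 1 F₂ q)
    (div_nonneg : ∀ q ∈ Icc (x₀, y₀) (x₁, y₁), 0 ≤ planeDiv F₁ F₂ q)
    (left : ∀ y ∈ Icc y₀ y₁, F₁ (x₀, y) = 0) (right : ∀ y ∈ Icc y₀ y₁, F₁ (x₁, y) = 0)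
    (bottom : ∀ x ∈ Icc x₀ x₁, F₂ (x, y₀) = 0) :
    ∫ q in Icc (x₀, y₀) (x₁, s), planeDiv F₁ F₂ q ≤ ∫ x in x₀..x₁, F₂ (x, y₁) := by
  have subset : Icc (x₀, y₀) (x₁, s) ⊆ Icc (x₀, y₀) (x₁, y₁) :=
    Icc_subset_Icc le_rfl ⟨le_rfl, hs₁⟩
  calc ∫ q in Icc (x₀, y₀) (x₁, s), planeDiv F₁ F₂ q
      ≤ ∫ q in Icc (x₀, y₀) (x₁, y₁), planeDiv F₁ F₂ q :=
        setIntegral_mono_set (integrableOn_planeDiv isCompact_Icc hF₁ hF₂)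
          (ae_restrict_of_forall_mem measurableSet_Icc div_nonneg) subset.eventuallyLE
    _ = ∫ x in x₀..x₁, F₂ (x, y₁) :=
        setIntegral_planeDiv_eq_integral_top hx (hs.trans hs₁) hF₁ hF₂ left right bottom

lemma planeDiv_nonpos_of_flux_tendsto {h : ℝ → ℝ}
    (hF₁ : ∀ q ∈ Icc x₀ x₁ ×ˢ Ico y₀ y₁, ContDiffAt ℝ 1 F₁ q)
    (hF₂ : ∀ q ∈ Icc x₀ x₁ ×ˢ Ico y₀ y₁, ContDiffAt ℝ 1 F₂ q)
    (div_nonneg : ∀ q ∈ Icc x₀ x₁ ×ˢ Ico y₀ y₁, 0 ≤ planeDiv F₁ F₂ q)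
    (left : ∀ y ∈ Ico y₀ y₁, F₁ (x₀, y) = 0) (right : ∀ y ∈ Ico y₀ y₁, F₁ (x₁, y) = 0)
    (bottom : ∀ x ∈ Icc x₀ x₁, F₂ (x, y₀) = 0) (hh : Tendsto h (𝓝[<] y₁) (𝓝 0))
    (top : ∀ y ∈ Ioo y₀ y₁, ∫ x in x₀..x₁, F₂ (x, y) ≤ h y)
    {q : ℝ × ℝ} (hq : q ∈ Ioo x₀ x₁ ×ˢ Ioo y₀ y₁) : planeDiv F₁ F₂ q ≤ 0 := by
  by_contra! hpos
  have hx : x₀ ≤ x₁ := (hq.1.1.trans hq.1.2).le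
  obtain ⟨s₀, hqs, hs₀⟩ := exists_between hq.2.2
  have sub {s : ℝ} (hs : s < y₁) : Icc (x₀, y₀) (x₁, s) ⊆ Icc x₀ x₁ ×ˢ Ico y₀ y₁ := fun p hp =>
    ⟨⟨hp.1.1, hp.2.1⟩, hp.1.2, hp.2.2.trans_lt hs⟩
  have integrable : IntegrableOn (planeDiv F₁ F₂) (Icc (x₀, y₀) (x₁, s₀)) :=
    integrableOn_planeDiv isCompact_Icc (fun p hp => hF₁ p (sub hs₀ hp))
      fun p hp => hF₂ p (sub hs₀ hp)
  have integral_pos : 0 < ∫ p in Icc (x₀, y₀) (x₁, s₀), planeDiv F₁ F₂ p := by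
    have hqS : Icc (x₀, y₀) (x₁, s₀) ∈ 𝓝 q := by
      rw [Icc_prod_eq]
      exact prod_mem_nhds (Icc_mem_nhds hq.1.1 hq.1.2) (Icc_mem_nhds hq.2.1 hqs)
    have hqR := sub hs₀ (mem_of_mem_nhds hqS)
    exact setIntegral_pos_of_mem_nhds measurableSet_Icc integrable
      (fun p hp => div_nonneg p (sub hs₀ hp)) hqS
      (continuousAt_planeDiv (hF₁ q hqR) (hF₂ q hqR)) hpos
  have integral_le : ∀ s ∈ Ioo s₀ y₁, ∫ p in Icc (x₀, y₀) (x₁, s₀), planeDiv F₁ F₂ p ≤ h s :=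
    fun s hs => (setIntegral_planeDiv_le_integral_top hx (hq.2.1.trans hqs).le hs.1.le
      (fun p hp => hF₁ p (sub hs.2 hp)) (fun p hp => hF₂ p (sub hs.2 hp))
      (fun p hp => div_nonneg p (sub hs.2 hp)) (fun y hy => left y ⟨hy.1, hy.2.trans_lt hs.2⟩)
      (fun y hy => right y ⟨hy.1, hy.2.trans_lt hs.2⟩) bottom).trans
        (top s ⟨(hq.2.1.trans hqs).trans hs.1, hs.2⟩)
  have : ∫ p in Icc (x₀, y₀) (x₁, s₀), planeDiv F₁ F₂ p ≤ 0 :=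
    ge_of_tendsto hh (Filter.mem_of_superset (Ioo_mem_nhdsLT hs₀) integral_le)
  exact this.not_gt integral_pos

end OpenSide

/-! ### The comparison principle -/

section Comparison

/-- A smooth cut-off which is positive exactly at the points of `O` where `v` exceeds `w`. -/
def excessCutoff (O : Set (ℝ × ℝ)) (v w : ℝ × ℝ → ℝ) : ℝ × ℝ → ℝ :=
  O.indicator fun p => smoothTransition (v p - w p)

/-- The difference of the angular fluxes of `v` and `w`, cut off to the set where `v` exceeds
`w`. -/
def excessAngularFlux (O : Set (ℝ × ℝ)) (v w : ℝ × ℝ → ℝ) (p : ℝ × ℝ) : ℝ :=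
  excessCutoff O v w p * (angularFlux v p - angularFlux w p)

/-- The difference of the radial fluxes of `v` and `w`, cut off to the set where `v` exceeds
`w`. -/
def excessRadialFlux (O : Set (ℝ × ℝ)) (v w : ℝ × ℝ → ℝ) (p : ℝ × ℝ) : ℝ :=
  excessCutoff O v w p * (radialFlux v p - radialFlux w p)

variable {O : Set (ℝ × ℝ)} {v w F G : ℝ × ℝ → ℝ} {q : ℝ × ℝ}

lemma excessCutoff_eq_zero (h : q ∈ O → v q ≤ w q) : excessCutoff O v w q = 0 :=
  indicator_apply_eq_zero.2 fun hq => smoothTransition.zero_of_nonpos (sub_nonpos.2 (h hq))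

lemma excessCutoff_pos (hq : q ∈ O) (h : w q < v q) : 0 < excessCutoff O v w q := by
  rw [excessCutoff, indicator_of_mem hq]
  exact smoothTransition.pos_of_pos (sub_pos.2 h)

lemma excessCutoff_nonneg (O : Set (ℝ × ℝ)) (v w : ℝ × ℝ → ℝ) (q : ℝ × ℝ) :
    0 ≤ excessCutoff O v w q :=
  indicator_nonneg (fun _ _ => smoothTransition.nonneg _) q

lemma excessCutoff_le_one (O : Set (ℝ × ℝ)) (v w : ℝ × ℝ → ℝ) (q : ℝ × ℝ) :
    excessCutoff O v w q ≤ 1 :=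
  indicator_apply_le' (fun _ => smoothTransition.le_one _) fun _ => zero_le_one

lemma excessCutoff_eventuallyEq (hO : IsOpen O) (hq : q ∈ O) :
    excessCutoff O v w =ᶠ[𝓝 q] fun p => smoothTransition (v p - w p) :=
  (hO.eventually_mem hq).mono fun _ hp => indicator_of_mem hp _

lemma excessRadialFlux_le (hq : 0 ≤ q.2) : excessRadialFlux O v w q ≤ q.2 - radialFlux w q :=
  calc excessCutoff O v w q * (radialFlux v q - radialFlux w q)
      ≤ excessCutoff O v w q * (q.2 - radialFlux w q) := by
        gcongr
        exacts [excessCutoff_nonneg O v w q, radialFlux_le hq]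
    _ ≤ q.2 - radialFlux w q :=
        mul_le_of_le_one_left (sub_nonneg.2 (radialFlux_le hq)) (excessCutoff_le_one O v w q)

lemma excessCutoff_mul_eventuallyEq_zero (h : ∀ᶠ p in 𝓝 q, p ∈ O → v p ≤ w p)
    (F : ℝ × ℝ → ℝ) : (fun p => excessCutoff O v w p * F p) =ᶠ[𝓝 q] fun _ => 0 := by
  filter_upwards [h] with p hp
  rw [excessCutoff_eq_zero hp, zero_mul]

lemma contDiffAt_excessCutoff_mul {n : ℕ∞} (hO : IsOpen O)
    (hvw : q ∈ O → ContDiffAt ℝ n (fun p => v p - w p) q) (hF : q ∈ O → ContDiffAt ℝ n F q)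
    (edge : q ∉ O → ∀ᶠ p in 𝓝 q, p ∈ O → v p ≤ w p) :
    ContDiffAt ℝ n (fun p => excessCutoff O v w p * F p) q := by
  by_cases hq : q ∈ O
  · exact ((smoothTransition.contDiffAt.comp q (hvw hq)).congr_of_eventuallyEq
      (excessCutoff_eventuallyEq hO hq)).mul (hF hq)
  · exact contDiffAt_const.congr_of_eventuallyEq (excessCutoff_mul_eventuallyEq_zero (edge hq) F)

lemma pdx_excessCutoff (hO : IsOpen O) (hq : q ∈ O) (hv : DifferentiableAt ℝ v q)
    (hw : DifferentiableAt ℝ w q) :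
    pdx (excessCutoff O v w) q = deriv smoothTransition (v q - w q) * (pdx v q - pdx w q) := by
  have hs : DifferentiableAt ℝ smoothTransition (v q - w q) :=
    (smoothTransition.contDiffAt (n := 1)).differentiableAt one_ne_zero
  rw [pdx_congr (excessCutoff_eventuallyEq hO hq)]
  exact pdx_eq_of_hasDerivAt (hs.comp (g := smoothTransition) q (hv.fun_sub hw))
    (HasDerivAt.comp (h₂ := smoothTransition) q.1 hs.hasDerivAt
      ((hasDerivAt_pdx hv).sub (hasDerivAt_pdx hw)))

lemma pdy_excessCutoff (hO : IsOpen O) (hq : q ∈ O) (hv : DifferentiableAt ℝ v q)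
    (hw : DifferentiableAt ℝ w q) :
    pdy (excessCutoff O v w) q = deriv smoothTransition (v q - w q) * (pdy v q - pdy w q) := by
  have hs : DifferentiableAt ℝ smoothTransition (v q - w q) :=
    (smoothTransition.contDiffAt (n := 1)).differentiableAt one_ne_zero
  rw [pdy_congr (excessCutoff_eventuallyEq hO hq)]
  exact pdy_eq_of_hasDerivAt (hs.comp (g := smoothTransition) q (hv.fun_sub hw))
    (HasDerivAt.comp (h₂ := smoothTransition) q.2 hs.hasDerivAt
      ((hasDerivAt_pdy hv).sub (hasDerivAt_pdy hw)))

lemma planeDiv_mul_sub {g F₁ F₂ G₁ G₂ : ℝ × ℝ → ℝ} (hg : DifferentiableAt ℝ g q)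
    (hF₁ : DifferentiableAt ℝ F₁ q) (hF₂ : DifferentiableAt ℝ F₂ q)
    (hG₁ : DifferentiableAt ℝ G₁ q) (hG₂ : DifferentiableAt ℝ G₂ q) :
    planeDiv (fun p => g p * (F₁ p - G₁ p)) (fun p => g p * (F₂ p - G₂ p)) q
      = g q * (planeDiv F₁ F₂ q - planeDiv G₁ G₂ q)
        + (pdx g q * (F₁ q - G₁ q) + pdy g q * (F₂ q - G₂ q)) := by
  simp only [planeDiv]
  rw [pdx_eq_of_hasDerivAt (hg.fun_mul (hF₁.fun_sub hG₁))
      ((hasDerivAt_pdx hg).mul ((hasDerivAt_pdx hF₁).sub (hasDerivAt_pdx hG₁))),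
    pdy_eq_of_hasDerivAt (hg.fun_mul (hF₂.fun_sub hG₂))
      ((hasDerivAt_pdy hg).mul ((hasDerivAt_pdy hF₂).sub (hasDerivAt_pdy hG₂)))]
  simp only [Prod.mk.eta]
  ring

lemma excessCutoff_mul_le_planeDiv (hO : IsOpen O) (hqO : q ∈ O) (hq : 0 < q.2)
    (hv : ContDiffAt ℝ 2 v q) (hw : ContDiffAt ℝ 2 w q) :
    excessCutoff O v w q * (polarFluxDiv v q - polarFluxDiv w q)
      ≤ planeDiv (excessAngularFlux O v w) (excessRadialFlux O v w) q := by
  have dv := hv.differentiableAt two_ne_zero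
  have dw := hw.differentiableAt two_ne_zero
  have hcut : DifferentiableAt ℝ (excessCutoff O v w) q :=
    (((smoothTransition.contDiffAt (n := 2)).comp q (hv.sub hw)).congr_of_eventuallyEq
      (excessCutoff_eventuallyEq hO hqO)).differentiableAt two_ne_zero
  have product_rule := planeDiv_mul_sub hcut
    ((contDiffAt_angularFlux hv hq.ne').differentiableAt one_ne_zero)
    ((contDiffAt_radialFlux hv hq.ne').differentiableAt one_ne_zero)
    ((contDiffAt_angularFlux hw hq.ne').differentiableAt one_ne_zero)
    ((contDiffAt_radialFlux hw hq.ne').differentiableAt one_ne_zero)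
  rw [pdx_excessCutoff hO hqO dv dw, pdy_excessCutoff hO hqO dv dw] at product_rule
  have slope_nonneg : 0 ≤ deriv smoothTransition (v q - w q) :=
    smoothTransition.monotone.deriv_nonneg
  refine le_trans ?_ product_rule.ge
  simp only [mul_assoc, ← mul_add]
  exact le_add_of_nonneg_right (mul_nonneg slope_nonneg (polarFlux_monotone v w hq))

lemma contDiffAt_excessAngularFlux (hO : IsOpen O) (hq : q.2 ≠ 0)
    (hv : q ∈ O → ContDiffAt ℝ 2 v q) (hw : ContDiffAt ℝ 2 w q)
    (edge : q ∉ O → ∀ᶠ p in 𝓝 q, p ∈ O → v p ≤ w p) :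
    ContDiffAt ℝ 1 (excessAngularFlux O v w) q :=
  contDiffAt_excessCutoff_mul (n := 1) hO (fun h => ((hv h).sub hw).of_le one_le_two)
    (fun h => (contDiffAt_angularFlux (hv h) hq).sub (contDiffAt_angularFlux hw hq)) edge

lemma contDiffAt_excessRadialFlux (hO : IsOpen O) (hq : q.2 ≠ 0)
    (hv : q ∈ O → ContDiffAt ℝ 2 v q) (hw : ContDiffAt ℝ 2 w q)
    (edge : q ∉ O → ∀ᶠ p in 𝓝 q, p ∈ O → v p ≤ w p) :
    ContDiffAt ℝ 1 (excessRadialFlux O v w) q :=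
  contDiffAt_excessCutoff_mul (n := 1) hO (fun h => ((hv h).sub hw).of_le one_le_two)
    (fun h => (contDiffAt_radialFlux (hv h) hq).sub (contDiffAt_radialFlux hw hq)) edge

lemma planeDiv_excessFlux_nonneg (hO : IsOpen O) (hq : 0 < q.2)
    (hv : q ∈ O → ContDiffAt ℝ 2 v q) (hw : ContDiffAt ℝ 2 w q)
    (div_le : q ∈ O → polarFluxDiv w q ≤ polarFluxDiv v q)
    (edge : q ∉ O → ∀ᶠ p in 𝓝 q, p ∈ O → v p ≤ w p) :
    0 ≤ planeDiv (excessAngularFlux O v w) (excessRadialFlux O v w) q := by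
  by_cases hqO : q ∈ O
  · exact (mul_nonneg (excessCutoff_nonneg O v w q) (sub_nonneg.2 (div_le hqO))).trans
      (excessCutoff_mul_le_planeDiv hO hqO hq (hv hqO) hw)
  · have dθ : pdx (excessAngularFlux O v w) q = pdx (fun _ => 0) q :=
      pdx_congr (excessCutoff_mul_eventuallyEq_zero (edge hqO) _)
    have dρ : pdy (excessRadialFlux O v w) q = pdy (fun _ => 0) q :=
      pdy_congr (excessCutoff_mul_eventuallyEq_zero (edge hqO) _)
    rw [planeDiv, dθ, dρ]
    simp [pdx, pdy]

variable {x₀ x₁ y₀ y₁ : ℝ}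

lemma continuousOn_slice {K I : Set ℝ} {y : ℝ} (hF : ∀ p ∈ K ×ˢ I, ContinuousAt F p)
    (hy : y ∈ I) : ContinuousOn (fun x => F (x, y)) K := fun x hx =>
  ((hF (x, y) ⟨hx, hy⟩).comp (f := fun x : ℝ => (x, y)) (by fun_prop)).continuousWithinAt

lemma le_of_polarFluxDiv_lt (hO : IsOpen O) (hx : x₀ ≤ x₁) (hy₀ : 0 < y₀)
    (hw : ∀ p ∈ Icc x₀ x₁ ×ˢ Ico y₀ y₁, ContDiffAt ℝ 2 w p)
    (hv : ∀ p ∈ Icc x₀ x₁ ×ˢ Ico y₀ y₁, p ∈ O → ContDiffAt ℝ 2 v p)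
    (div_lt : ∀ p ∈ Icc x₀ x₁ ×ˢ Ico y₀ y₁, p ∈ O → polarFluxDiv w p < polarFluxDiv v p)
    (edge : ∀ p ∈ Icc x₀ x₁ ×ˢ Ico y₀ y₁, p ∉ O → ∀ᶠ p' in 𝓝 p, p' ∈ O → v p' ≤ w p')
    (left : ∀ y ∈ Ico y₀ y₁, (x₀, y) ∉ O) (right : ∀ y ∈ Ico y₀ y₁, (x₁, y) ∉ O)
    (bottom : ∀ x ∈ Icc x₀ x₁, (x, y₀) ∈ O → v (x, y₀) ≤ w (x, y₀))
    (flux : Tendsto (fun y => ∫ x in x₀..x₁, (y - radialFlux w (x, y))) (𝓝[<] y₁) (𝓝 0))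
    (hq : q ∈ Ioo x₀ x₁ ×ˢ Ioo y₀ y₁) (hqO : q ∈ O) : v q ≤ w q := by
  have pos : ∀ p ∈ Icc x₀ x₁ ×ˢ Ico y₀ y₁, 0 < p.2 := fun p hp => hy₀.trans_le hp.2.1
  have angular_contDiffAt (p) (hp : p ∈ Icc x₀ x₁ ×ˢ Ico y₀ y₁) :=
    contDiffAt_excessAngularFlux hO (pos p hp).ne' (hv p hp) (hw p hp) (edge p hp)
  have radial_contDiffAt (p) (hp : p ∈ Icc x₀ x₁ ×ˢ Ico y₀ y₁) :=
    contDiffAt_excessRadialFlux hO (pos p hp).ne' (hv p hp) (hw p hp) (edge p hp)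
  have flux_zero {p G} (h : p ∈ O → v p ≤ w p) : excessCutoff O v w p * G = 0 := by
    rw [excessCutoff_eq_zero h, zero_mul]
  have top : ∀ y ∈ Ioo y₀ y₁, ∫ x in x₀..x₁, excessRadialFlux O v w (x, y)
      ≤ ∫ x in x₀..x₁, (y - radialFlux w (x, y)) := by
    intro y hy
    have hy' : y ∈ Ico y₀ y₁ := ⟨hy.1.le, hy.2⟩
    refine intervalIntegral.integral_mono_on hx
      (ContinuousOn.intervalIntegrable_of_Icc hx
        (continuousOn_slice (fun p hp => (radial_contDiffAt p hp).continuousAt) hy'))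
      (ContinuousOn.intervalIntegrable_of_Icc hx (continuousOn_const.sub
        (continuousOn_slice (fun p hp =>
          (contDiffAt_radialFlux (hw p hp) (pos p hp).ne').continuousAt) hy')))
      fun x _ => excessRadialFlux_le (q := (x, y)) (hy₀.trans hy.1).le
  have div_nonpos := planeDiv_nonpos_of_flux_tendsto angular_contDiffAt radial_contDiffAt
    (fun p hp => planeDiv_excessFlux_nonneg hO (pos p hp) (hv p hp) (hw p hp)
      (fun hpO => (div_lt p hp hpO).le) (edge p hp))
    (fun y hy => flux_zero fun h => absurd h (left y hy))
    (fun y hy => flux_zero fun h => absurd h (right y hy))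
    (fun x hx => flux_zero (bottom x hx)) flux top hq
  have hqR : q ∈ Icc x₀ x₁ ×ˢ Ico y₀ y₁ :=
    ⟨⟨hq.1.1.le, hq.1.2.le⟩, hq.2.1.le, hq.2.2⟩
  by_contra! exceeds
  exact ((mul_pos (excessCutoff_pos hqO exceeds) (sub_pos.2 (div_lt q hqR hqO))).trans_le
    (excessCutoff_mul_le_planeDiv hO hqO (pos q hqR) (hv q hqR hqO) (hw q hqR))).not_ge div_nonpos

end Comparison

/-! ### The barrier -/

section BarrierInequality

lemma sqrt_add_sq_cube_le {x y : ℝ} (hx : 0 ≤ x) (hy : 0 ≤ y) :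
    √(x ^ 2 + y ^ 2) ^ 3 ≤ x ^ 3 + 3 / 2 * (x * y ^ 2) + y ^ 3 := by
  refine le_of_sq_le_sq ?_ (by positivity)
  have sq_cube : (√(x ^ 2 + y ^ 2) ^ 3) ^ 2 = (x ^ 2 + y ^ 2) ^ 3 := by
    rw [pow_right_comm, Real.sq_sqrt (by positivity)]
  have cross_term : 0 ≤ (x * y ^ 3) * (2 * x ^ 2 + 3 * y ^ 2 - 3 / 4 * (x * y)) :=
    mul_nonneg (by positivity) (by nlinarith [sq_nonneg (x - y)])
  rw [sq_cube]
  nlinarith [sq_nonneg (x - y), mul_nonneg hx hy]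

variable {r p b k m α β : ℝ}

/-- The leading term `r * p ^ 3` is exactly the one that cancels in the barrier inequality. -/
lemma area_cube_le (hr0 : 0 < r) (hr1 : r ≤ 1) (hp : 0 ≤ p) :
    r ^ 2 * √(1 + p ^ 2 + (b / r) ^ 2) ^ 3
      ≤ r * p ^ 3 + 3 / 2 * (p * (r ^ 2 + b ^ 2)) + √(r ^ 2 + b ^ 2) ^ 3 / r := by
  have sq_T : √(r ^ 2 + b ^ 2) ^ 2 = r ^ 2 + b ^ 2 := Real.sq_sqrt (by positivity)
  set T := √(r ^ 2 + b ^ 2)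
  rw [← sq_T]
  have radicand : 1 + p ^ 2 + (b / r) ^ 2 = p ^ 2 + (T / r) ^ 2 := by
    rw [div_pow, div_pow, sq_T]
    field_simp
    ring
  calc r ^ 2 * √(1 + p ^ 2 + (b / r) ^ 2) ^ 3
      ≤ r ^ 2 * (p ^ 3 + 3 / 2 * (p * (T / r) ^ 2) + (T / r) ^ 3) := by
        rw [radicand]
        gcongr
        exact sqrt_add_sq_cube_le hp (div_nonneg (Real.sqrt_nonneg _) hr0.le)
    _ = r ^ 2 * p ^ 3 + 3 / 2 * (p * T ^ 2) + T ^ 3 / r := by field_simp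
    _ ≤ r * p ^ 3 + 3 / 2 * (p * T ^ 2) + T ^ 3 / r := by
        gcongr
        nlinarith

/-- Each error term is bounded by multiples of `S * m` and `S * β ^ 2`. -/
lemma barrier_error_lt {S : ℝ} (hr : 1 / 2 ≤ r) (hr1 : r ≤ 1) (hk : 24 ≤ k) (hm : 2 ≤ m)
    (hα : 0 ≤ α) (hαm : α ≤ 2 * m) (hS : 0 < S) (hSm : S ≤ 4 * m ^ 2)
    (hmS : 12 * m ^ 2 ≤ k * S) :
    3 / 2 * ((α + β) * S) + √S ^ 3 / r + r ^ 2 * α ^ 2 + 2 * m + 2 * (α + β) ^ 2 * m + S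
      < (k - 1) * (S * β ^ 2) + 2 * k * (S * m) := by
  have hy : 0 < S * m := by positivity
  have hz : 0 ≤ S * β ^ 2 := by positivity
  have S_le : S ≤ S * m / 2 := by nlinarith
  have linear : (α + β) * S ≤ 5 / 2 * (S * m) + S * β ^ 2 / 2 := by
    nlinarith [mul_nonneg hS.le (sq_nonneg (β - 1)), mul_nonneg hS.le (sub_nonneg.2 hαm)]
  have cube : √S ^ 3 / r ≤ 4 * (S * m) := by
    have hT : √S ≤ 2 * m := Real.sqrt_le_left (by linarith) |>.2 (by linarith [mul_pow 2 m 2])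
    rw [div_le_iff₀ (by linarith), pow_succ, Real.sq_sqrt hS.le]
    nlinarith [mul_le_mul_of_nonneg_left hT hS.le]
  have m_cube : 12 * m ^ 3 ≤ k * (S * m) := by
    nlinarith [mul_le_mul_of_nonneg_right hmS (by linarith : 0 ≤ m)]
  have α_sq : α ^ 2 ≤ 4 * m ^ 2 := by nlinarith
  have m_sq : 2 * m ^ 2 ≤ m ^ 3 := by nlinarith [sq_nonneg m]
  have α_term : r ^ 2 * α ^ 2 ≤ k * (S * m) / 6 := by
    nlinarith [mul_le_of_le_one_left (sq_nonneg α) (pow_le_one₀ (n := 2) (by linarith) hr1)]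
  have m_term : 2 * m ≤ k * (S * m) / 24 := by nlinarith
  have slope_term : 2 * (α + β) ^ 2 * m ≤ 4 / 3 * (k * (S * m)) + k * (S * β ^ 2) / 6 := by
    have : m ≤ k * S / 24 := by nlinarith
    nlinarith [mul_nonneg (sq_nonneg (α - β)) (by linarith : 0 ≤ m),
      mul_le_mul_of_nonneg_right α_sq (by linarith : 0 ≤ m),
      mul_le_mul_of_nonneg_right this (sq_nonneg β)]
  nlinarith [mul_nonneg (sub_nonneg.2 hk) hy.le, mul_nonneg (sub_nonneg.2 hk) hz]

/-- The strict subsolution inequality for a function with radial derivative `α + β`, angular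
derivative `b`, and second derivatives `k * β ^ 2 + 2 * k * m - α ^ 2` (radial), `- b * α` (mixed)
and `- 2 * m - b ^ 2` (angular). -/
lemma barrier_ineq (hr : 1 / 2 ≤ r) (hr1 : r ≤ 1) (hk : 24 ≤ k) (hm : 2 ≤ m) (hα : 0 ≤ α)
    (hαm : α ≤ 2 * m) (hβ : 0 ≤ β) (hSm : r ^ 2 + b ^ 2 ≤ 4 * m ^ 2)
    (hmS : 12 * m ^ 2 ≤ k * (r ^ 2 + b ^ 2)) :
    r ^ 2 * √(1 + (α + β) ^ 2 + (b / r) ^ 2) ^ 3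
      < (r ^ 2 + b ^ 2) * (k * β ^ 2 + 2 * k * m - α ^ 2)
        + 2 * (α + β) * b ^ 2 / r + 2 * (α + β) * b ^ 2 * α
        + (1 + (α + β) ^ 2) * (-2 * m - b ^ 2 + r * (α + β)) := by
  have hr0 : 0 < r := by linarith
  have hS : 0 < r ^ 2 + b ^ 2 := by positivity
  have area := area_cube_le (b := b) hr0 hr1 (add_nonneg hα hβ)
  have error := barrier_error_lt (β := β) hr hr1 hk hm hα hαm hS hSm hmS
  have dropped : 0 ≤ r ^ 2 * β ^ 2 + 2 * (α + β) * b ^ 2 / r + r * (α + β) + r ^ 2 := by positivity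
  linarith

end BarrierInequality

section Barrier

/-- The function `φ` whose logarithm is the main part of the barrier. It is positive around `(a, 1)`
and, in the strip `1 - 1 / k ≤ ρ < 1` with `k` large, nonpositive for `2 * c ≤ |θ - a|`. -/
def barrierBump (a c k : ℝ) (q : ℝ × ℝ) : ℝ :=
  c ^ 2 - (q.1 - a) ^ 2 + k * (q.2 - (1 - 1 / k)) ^ 2

/-- A function of polar coordinates `(θ, ρ)`, defined where `barrierBump` is positive and `ρ < 1`,
which tends to `-∞` on the boundary of this set inside the disk and to `+∞` on the circle
`ρ = 1`. -/
def barrier (a c k : ℝ) (q : ℝ × ℝ) : ℝ := log (barrierBump a c k q) - log (1 - q.2) / k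

variable {a c k : ℝ} {q : ℝ × ℝ}

lemma contDiff_barrierBump {n : WithTop ℕ∞} : ContDiff ℝ n (barrierBump a c k) := by
  unfold barrierBump
  fun_prop

lemma hasDerivAt_barrierBump_angle (a c k : ℝ) (q : ℝ × ℝ) :
    HasDerivAt (fun s => barrierBump a c k (s, q.2)) (-2 * (q.1 - a)) q.1 := by
  refine ((((((hasDerivAt_id q.1).sub_const a).pow 2).const_sub (c ^ 2)).add_const
    (k * (q.2 - (1 - 1 / k)) ^ 2))).congr_deriv ?_
  simp

lemma hasDerivAt_barrierBump_radius (a c k : ℝ) (q : ℝ × ℝ) :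
    HasDerivAt (fun s => barrierBump a c k (q.1, s)) (2 * k * (q.2 - (1 - 1 / k))) q.2 := by
  refine (((((hasDerivAt_id q.2).sub_const (1 - 1 / k)).pow 2).const_mul k).const_add
    (c ^ 2 - (q.1 - a) ^ 2)).congr_deriv ?_
  simp only [id]
  ring

lemma contDiffAt_barrier {n : WithTop ℕ∞} (hq : 0 < barrierBump a c k q) (hq1 : q.2 < 1) :
    ContDiffAt ℝ n (barrier a c k) q :=
  (contDiff_barrierBump.contDiffAt.log hq.ne').sub
    (((contDiffAt_const.sub contDiffAt_snd).log (sub_pos.2 hq1).ne').div_const k)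

lemma pdx_barrier (hq : 0 < barrierBump a c k q) (hq1 : q.2 < 1) :
    pdx (barrier a c k) q = -2 * (q.1 - a) / barrierBump a c k q :=
  pdx_eq_of_hasDerivAt ((contDiffAt_barrier hq hq1).differentiableAt one_ne_zero)
    (((hasDerivAt_barrierBump_angle a c k q).log hq.ne').sub_const (log (1 - q.2) / k))

lemma hasDerivAt_log_one_sub_div {x : ℝ} (hx : x < 1) :
    HasDerivAt (fun s => log (1 - s) / k) (-(1 / (k * (1 - x)))) x := by
  refine ((((hasDerivAt_id x).const_sub 1).log (sub_pos.2 hx).ne').div_const k).congr_deriv ?_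
  rw [id, div_div, mul_comm k, neg_div]

lemma pdy_barrier (hq : 0 < barrierBump a c k q) (hq1 : q.2 < 1) :
    pdy (barrier a c k) q
      = 2 * k * (q.2 - (1 - 1 / k)) / barrierBump a c k q + 1 / (k * (1 - q.2)) := by
  rw [pdy_eq_of_hasDerivAt ((contDiffAt_barrier hq hq1).differentiableAt one_ne_zero)
    (((hasDerivAt_barrierBump_radius a c k q).log hq.ne').sub (hasDerivAt_log_one_sub_div hq1)),
    sub_neg_eq_add]

lemma eventually_barrierBump_pos (hq : 0 < barrierBump a c k q) (hq1 : q.2 < 1) :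
    ∀ᶠ p in 𝓝 q, 0 < barrierBump a c k p ∧ p.2 < 1 :=
  ((contDiff_barrierBump (n := 0)).continuous.continuousAt.eventually (lt_mem_nhds hq)).and
    (continuousAt_snd.eventually (gt_mem_nhds hq1))

lemma pdx_pdx_barrier (hq : 0 < barrierBump a c k q) (hq1 : q.2 < 1) :
    pdx (pdx (barrier a c k)) q
      = -2 * (barrierBump a c k q)⁻¹ - (-2 * (q.1 - a) / barrierBump a c k q) ^ 2 := by
  have hφ := (contDiff_barrierBump (a := a) (c := c) (k := k) (n := 1)).differentiable
    one_ne_zero q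
  rw [pdx_congr ((eventually_barrierBump_pos hq hq1).mono fun p hp => pdx_barrier hp.1 hp.2),
    pdx_eq_of_hasDerivAt (by fun_prop (disch := exact hq.ne'))
      ((((hasDerivAt_id q.1).sub_const a).const_mul (-2)).div
        (hasDerivAt_barrierBump_angle a c k q) hq.ne')]
  simp only [id, Prod.mk.eta]
  field_simp

lemma pdy_pdx_barrier (hq : 0 < barrierBump a c k q) (hq1 : q.2 < 1) :
    pdy (pdx (barrier a c k)) q = -((-2 * (q.1 - a) / barrierBump a c k q) *
      (2 * k * (q.2 - (1 - 1 / k)) / barrierBump a c k q)) := by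
  have hφ := (contDiff_barrierBump (a := a) (c := c) (k := k) (n := 1)).differentiable
    one_ne_zero q
  rw [pdy_congr ((eventually_barrierBump_pos hq hq1).mono fun p hp => pdx_barrier hp.1 hp.2),
    pdy_eq_of_hasDerivAt (by fun_prop (disch := exact hq.ne'))
      ((hasDerivAt_const q.2 (-2 * (q.1 - a))).div (hasDerivAt_barrierBump_radius a c k q) hq.ne')]
  simp only [Prod.mk.eta]
  field_simp
  ring

lemma pdy_pdy_barrier (hk : k ≠ 0) (hq : 0 < barrierBump a c k q) (hq1 : q.2 < 1) :
    pdy (pdy (barrier a c k)) q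
      = k * (1 / (k * (1 - q.2))) ^ 2 + 2 * k * (barrierBump a c k q)⁻¹
        - (2 * k * (q.2 - (1 - 1 / k)) / barrierBump a c k q) ^ 2 := by
  have hφ := (contDiff_barrierBump (a := a) (c := c) (k := k) (n := 1)).differentiable
    one_ne_zero q
  have h1 : 1 - q.2 ≠ 0 := (sub_pos.2 hq1).ne'
  have hk1 : k * (1 - q.2) ≠ 0 := mul_ne_zero hk h1
  rw [pdy_congr ((eventually_barrierBump_pos hq hq1).mono fun p hp => pdy_barrier hp.1 hp.2),
    pdy_eq_of_hasDerivAt (by fun_prop (disch := first | exact hq.ne' | exact hk1))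
      (((((hasDerivAt_id q.2).sub_const (1 - 1 / k)).const_mul (2 * k)).div
        (hasDerivAt_barrierBump_radius a c k q) hq.ne').add
        ((hasDerivAt_const q.2 1).div (((hasDerivAt_id q.2).const_sub 1).const_mul k) hk1))]
  simp only [id, Prod.mk.eta]
  generalize 1 - q.2 = x at h1 hk1
  generalize q.2 - (1 - 1 / k) = y
  field_simp
  ring

end Barrier

section Subsolution

variable {a c k y : ℝ} {q : ℝ × ℝ}

lemma mul_sub_one_sub_inv_le_one (hk : 0 < k) (hy : y < 1) : k * (y - (1 - 1 / k)) ≤ 1 := by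
  have : k * (y - (1 - 1 / k)) = 1 - k * (1 - y) := by
    field_simp
    ring
  linarith [mul_pos hk (sub_pos.2 hy)]

lemma barrierBump_le (hk : 0 < k) (hq : q.2 ∈ Ico (1 - 1 / k) 1) :
    barrierBump a c k q ≤ c ^ 2 + 1 / k - (q.1 - a) ^ 2 := by
  have radial : k * (q.2 - (1 - 1 / k)) ^ 2 ≤ 1 / k := by
    rw [le_div_iff₀ hk]
    calc k * (q.2 - (1 - 1 / k)) ^ 2 * k = (k * (q.2 - (1 - 1 / k))) ^ 2 := by ring
      _ ≤ 1 := pow_le_one₀ (mul_nonneg hk.le (sub_nonneg.2 hq.1))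
        (mul_sub_one_sub_inv_le_one hk hq.2)
  unfold barrierBump
  linarith

lemma le_barrierBump_sq_add_sq (hc1 : c ≤ 1 / 2) (hc : 0 < c) (hk : 0 ≤ k) (hq : 1 / 2 ≤ q.2) :
    c ^ 4 / 16 ≤ (q.2 * barrierBump a c k q) ^ 2 + (2 * (q.1 - a)) ^ 2 := by
  rcases le_total ((q.1 - a) ^ 2) (c ^ 2 / 2) with near | far
  · have half : c ^ 2 / 2 ≤ barrierBump a c k q := by
      unfold barrierBump
      linarith [mul_nonneg hk (sq_nonneg (q.2 - (1 - 1 / k)))]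
    calc c ^ 4 / 16 = (1 / 2 * (c ^ 2 / 2)) ^ 2 := by ring
      _ ≤ (q.2 * barrierBump a c k q) ^ 2 := by gcongr
      _ ≤ _ := le_add_of_nonneg_right (sq_nonneg _)
  · have : c ^ 2 ≤ 1 := pow_le_one₀ hc.le (by linarith)
    nlinarith [sq_nonneg (q.2 * barrierBump a c k q), sq_nonneg c]

lemma le_of_le_mul_pow_four (hc : 0 < c) (hc1 : c ≤ 1 / 2) (hk : 192 ≤ k * c ^ 4) : 3072 ≤ k := by
  have : c ^ 4 ≤ (1 / 2) ^ 4 := by gcongr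
  by_contra! h
  nlinarith [pow_pos hc 4]

lemma inv_le_sq_of_le_mul_pow (hc : 0 < c) (hc1 : c ≤ 1 / 2) (hk : 192 ≤ k * c ^ 4) :
    1 / k ≤ c ^ 2 := by
  have hk0 : 0 < k := by linarith [le_of_le_mul_pow_four hc hc1 hk]
  have : c ^ 2 ≤ 1 := pow_le_one₀ hc.le (by linarith)
  rw [div_le_iff₀ hk0]
  nlinarith [mul_le_of_le_one_right (by positivity : 0 ≤ k * c ^ 2) this]

lemma barrierBump_nonpos (hc : 0 < c) (hc1 : c ≤ 1 / 2) (hk : 192 ≤ k * c ^ 4)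
    (hq : q.2 ∈ Ico (1 - 1 / k) 1) (far : 2 * c ≤ |q.1 - a|) : barrierBump a c k q ≤ 0 := by
  have hk0 : 0 < k := by linarith [le_of_le_mul_pow_four hc hc1 hk]
  have : (2 * c) ^ 2 ≤ (q.1 - a) ^ 2 := sq_le_sq.2 (by rwa [abs_of_pos (by positivity : 0 < 2 * c)])
  linarith [barrierBump_le (a := a) (c := c) hk0 hq, inv_le_sq_of_le_mul_pow hc hc1 hk,
    sq_nonneg c]

lemma barrierBump_le_half (hc : 0 < c) (hc1 : c ≤ 1 / 2) (hk : 192 ≤ k * c ^ 4)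
    (hq : q.2 ∈ Ico (1 - 1 / k) 1) : barrierBump a c k q ≤ 1 / 2 - (q.1 - a) ^ 2 := by
  have hk0 : 0 < k := by linarith [le_of_le_mul_pow_four hc hc1 hk]
  have c_sq : c ^ 2 ≤ (1 / 2) ^ 2 := by gcongr
  linarith [barrierBump_le (a := a) (c := c) hk0 hq, inv_le_sq_of_le_mul_pow hc hc1 hk]

lemma sq_add_sq_eq_mul_inv_barrierBump_sq (pos : 0 < barrierBump a c k q) :
    q.2 ^ 2 + (-2 * (q.1 - a) / barrierBump a c k q) ^ 2
      = ((q.2 * barrierBump a c k q) ^ 2 + (2 * (q.1 - a)) ^ 2)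
        * (barrierBump a c k q)⁻¹ ^ 2 := by
  field_simp

lemma half_le_of_mem_strip (hc : 0 < c) (hc1 : c ≤ 1 / 2) (hk : 192 ≤ k * c ^ 4)
    (hy : 1 - 1 / k ≤ y) : 1 / 2 ≤ y := by
  have : 1 / k ≤ 1 / 2 := by
    gcongr
    linarith [le_of_le_mul_pow_four hc hc1 hk]
  linarith

lemma sq_add_sq_slope_le (hc : 0 < c) (hc1 : c ≤ 1 / 2) (hk : 192 ≤ k * c ^ 4)
    (hq : q.2 ∈ Ico (1 - 1 / k) 1) (pos : 0 < barrierBump a c k q) :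
    q.2 ^ 2 + (-2 * (q.1 - a) / barrierBump a c k q) ^ 2
      ≤ 4 * (barrierBump a c k q)⁻¹ ^ 2 := by
  have φ_le := barrierBump_le_half (a := a) hc hc1 hk hq
  have : q.2 * barrierBump a c k q ≤ 1 :=
    mul_le_one₀ hq.2.le pos.le (by linarith [sq_nonneg (q.1 - a)])
  have q_pos : 0 < q.2 := by linarith [half_le_of_mem_strip hc hc1 hk hq.1]
  rw [sq_add_sq_eq_mul_inv_barrierBump_sq pos]
  gcongr
  nlinarith [mul_pos q_pos pos]

lemma le_mul_sq_add_sq_slope (hc : 0 < c) (hc1 : c ≤ 1 / 2) (hk : 192 ≤ k * c ^ 4)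
    (hq : 1 - 1 / k ≤ q.2) (pos : 0 < barrierBump a c k q) :
    12 * (barrierBump a c k q)⁻¹ ^ 2
      ≤ k * (q.2 ^ 2 + (-2 * (q.1 - a) / barrierBump a c k q) ^ 2) := by
  have k_ge := le_of_le_mul_pow_four hc hc1 hk
  have φ_ge := le_barrierBump_sq_add_sq (a := a) (k := k) hc1 hc (by linarith)
    (half_le_of_mem_strip hc hc1 hk hq)
  rw [sq_add_sq_eq_mul_inv_barrierBump_sq pos, ← mul_assoc]
  gcongr
  nlinarith

lemma lt_polarFluxDiv_barrier (hc : 0 < c) (hc1 : c ≤ 1 / 2) (hk : 192 ≤ k * c ^ 4)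
    (hq : q.2 ∈ Ico (1 - 1 / k) 1) (pos : 0 < barrierBump a c k q) :
    q.2 < polarFluxDiv (barrier a c k) q := by
  have k_ge := le_of_le_mul_pow_four hc hc1 hk
  have k_pos : 0 < k := by linarith
  have half := half_le_of_mem_strip hc hc1 hk hq.1
  have q_pos : 0 < q.2 := by linarith
  have two_le : 2 ≤ (barrierBump a c k q)⁻¹ := by
    rw [le_inv_comm₀ two_pos pos]
    linarith [sq_nonneg (q.1 - a), barrierBump_le_half (a := a) hc hc1 hk hq]
  have α_nonneg : 0 ≤ 2 * k * (q.2 - (1 - 1 / k)) / barrierBump a c k q :=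
    div_nonneg (mul_nonneg (by positivity) (sub_nonneg.2 hq.1)) pos.le
  have α_le : 2 * k * (q.2 - (1 - 1 / k)) / barrierBump a c k q
      ≤ 2 * (barrierBump a c k q)⁻¹ := by
    rw [mul_assoc, mul_div_assoc, div_eq_mul_inv]
    gcongr
    exact mul_le_of_le_one_left (inv_pos.2 pos).le (mul_sub_one_sub_inv_le_one k_pos hq.2)
  have β_nonneg : 0 ≤ 1 / (k * (1 - q.2)) :=
    one_div_nonneg.2 (mul_nonneg k_pos.le (sub_nonneg.2 hq.2.le))
  rw [polarFluxDiv_eq (contDiffAt_barrier pos hq.2) q_pos.ne', pdx_pdx_barrier pos hq.2,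
    pdy_pdx_barrier pos hq.2, pdy_pdy_barrier k_pos.ne' pos hq.2, pdx_barrier pos hq.2,
    pdy_barrier pos hq.2, lt_div_iff₀ (by positivity), ← mul_assoc, ← sq]
  refine (barrier_ineq half hq.2.le (by linarith) two_le α_nonneg α_le β_nonneg
    (sq_add_sq_slope_le hc hc1 hk hq pos)
    (le_mul_sq_add_sq_slope hc hc1 hk hq.1 pos)).trans_eq ?_
  ring

end Subsolution

/-! ### Blow-up in polar coordinates -/

section BlowUp

variable {a c k K θ₁ θ₂ x₀ x₁ y₀ : ℝ} {p : ℝ × ℝ} {w : ℝ × ℝ → ℝ}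

lemma barrierBump_base_pos (hk : 0 < k) : 0 < barrierBump a c k (a, 1) :=
  calc 0 < c ^ 2 + k * (1 / k) ^ 2 := by positivity
    _ = barrierBump a c k (a, 1) := by
      unfold barrierBump
      ring

lemma tendsto_barrier (hk : 0 < k) :
    Tendsto (barrier a c k) (𝓝[{q | q.2 < 1}] (a, 1)) atTop := by
  have tendsto_log_bump : Tendsto (fun q => log (barrierBump a c k q)) (𝓝[{q | q.2 < 1}] (a, 1))
      (𝓝 (log (barrierBump a c k (a, 1)))) :=
    ((contDiff_barrierBump (n := 0)).continuous.continuousAt.log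
      (barrierBump_base_pos hk).ne').mono_left nhdsWithin_le_nhds
  have tendsto_one_sub : Tendsto (fun q : ℝ × ℝ => 1 - q.2) (𝓝[{q | q.2 < 1}] (a, 1)) (𝓝[>] 0) :=
    tendsto_nhdsWithin_iff.2
      ⟨((by fun_prop : Continuous fun q : ℝ × ℝ => 1 - q.2).tendsto' _ _ (sub_self 1)).mono_left
        nhdsWithin_le_nhds, eventually_nhdsWithin_of_forall fun q (hq : q.2 < 1) => sub_pos.2 hq⟩
  refine (tendsto_log_bump.add_atTop ((tendsto_neg_atBot_atTop.comp
    (tendsto_log_nhdsGT_zero.comp tendsto_one_sub)).atTop_div_const hk)).congr fun q => ?_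
  rw [barrier, sub_eq_add_neg, ← neg_div, Function.comp_apply, Function.comp_apply]

lemma eventually_barrier_le (hw : ContinuousAt w p) (hp : p.2 < 1)
    (hφ : barrierBump a c k p ≤ 0) :
    ∀ᶠ q in 𝓝 p, 0 < barrierBump a c k q → barrier a c k q ≤ w q := by
  have bump_cont := (contDiff_barrierBump (a := a) (c := c) (k := k) (n := 0)).continuous
  have exp_cont : ContinuousAt (fun q => exp (w q + log (1 - q.2) / k)) p :=
    (hw.add (((continuousAt_const.sub continuousAt_snd).log
      (sub_pos.2 hp).ne').div_const k)).rexp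
  filter_upwards [bump_cont.continuousAt.eventually_lt exp_cont (hφ.trans_lt (exp_pos _))]
    with q hlt hpos
  exact sub_le_iff_le_add.2 ((log_lt_iff_lt_exp hpos).2 hlt).le

lemma exists_barrier_le_add (hc : 0 < c) (hc1 : c ≤ 1 / 2) (hk : 192 ≤ k * c ^ 4)
    (hw : ContinuousOn (fun x => w (x, 1 - 1 / k)) (Icc x₀ x₁)) :
    ∃ K, ∀ x ∈ Icc x₀ x₁, 0 < barrierBump a c k (x, 1 - 1 / k) →
      barrier a c k (x, 1 - 1 / k) ≤ w (x, 1 - 1 / k) + K := by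
  obtain ⟨m, hm⟩ := isCompact_Icc.bddBelow_image hw
  refine ⟨-log (1 - (1 - 1 / k)) / k - m, fun x hx pos => ?_⟩
  have k_pos : 0 < k := by linarith [le_of_le_mul_pow_four hc hc1 hk]
  have bump_le := barrierBump_le_half (a := a) (q := (x, 1 - 1 / k)) hc hc1 hk
    ⟨le_rfl, sub_lt_self 1 (by positivity)⟩
  have log_le := log_nonpos pos.le (by linarith [sq_nonneg (x - a)])
  have w_ge := hm (mem_image_of_mem _ hx)
  rw [barrier]
  linarith [neg_div k (log (1 - (1 - 1 / k)))]

lemma exists_barrier_le (hc : 0 < c) (hc1 : c ≤ 1 / 2) (hk : 192 ≤ k * c ^ 4)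
    (hw : ∀ p ∈ Icc (a - 2 * c) (a + 2 * c) ×ˢ Ico (1 - 1 / k) 1, ContDiffAt ℝ 2 w p)
    (div_le : ∀ p ∈ Icc (a - 2 * c) (a + 2 * c) ×ˢ Ico (1 - 1 / k) 1, polarFluxDiv w p ≤ p.2)
    (flux : Tendsto (fun y => ∫ x in (a - 2 * c)..(a + 2 * c), (y - radialFlux w (x, y)))
      (𝓝[<] 1) (𝓝 0)) :
    ∃ K, ∀ q ∈ Ioo (a - 2 * c) (a + 2 * c) ×ˢ Ioo (1 - 1 / k) 1, 0 < barrierBump a c k q →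
      barrier a c k q ≤ w q + K := by
  have k_pos : 0 < k := by linarith [le_of_le_mul_pow_four hc hc1 hk]
  have side_nonpos {x : ℝ} (hx : |x - a| = 2 * c) (y) (hy : y ∈ Ico (1 - 1 / k) 1) :
      (x, y) ∉ {q | 0 < barrierBump a c k q} :=
    (barrierBump_nonpos hc hc1 hk (q := (x, y)) hy hx.ge).not_gt
  obtain ⟨K, bottom⟩ := exists_barrier_le_add (a := a) hc hc1 hk
    (continuousOn_slice (fun p hp => (hw p hp).continuousAt)
      ⟨le_rfl, sub_lt_self 1 (by positivity)⟩)
  refine ⟨K, fun q hq pos => le_of_polarFluxDiv_lt (w := fun p => w p + K)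
    (isOpen_lt continuous_const (contDiff_barrierBump (n := 0)).continuous) (by linarith)
    (by linarith [half_le_of_mem_strip hc hc1 hk le_rfl])
    (fun p hp => (hw p hp).add contDiffAt_const)
    (fun p hp hpO => contDiffAt_barrier hpO hp.2.2) (fun p hp hpO => ?_)
    (fun p hp hpO => eventually_barrier_le ((hw p hp).continuousAt.add continuousAt_const) hp.2.2
      (not_lt.1 hpO))
    (side_nonpos ?_) (side_nonpos ?_) bottom ?_ hq pos⟩
  · rw [polarFluxDiv_add_const]
    exact (div_le p hp).trans_lt (lt_polarFluxDiv_barrier hc hc1 hk hp.2 hpO)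
  · rw [sub_sub_cancel_left, abs_neg, abs_of_pos (by positivity)]
  · rw [add_sub_cancel_left, abs_of_pos (by positivity)]
  · simpa only [radialFlux_add_const] using flux

lemma tendsto_flux_deficit_mono (hx : Icc x₀ x₁ ⊆ Icc θ₁ θ₂) (hx₀ : x₀ ≤ x₁) (hy₀ : y₀ < 1)
    (hw : ∀ p ∈ Icc θ₁ θ₂ ×ˢ Ico y₀ 1, ContDiffAt ℝ 2 w p)
    (flux : Tendsto (fun y => ∫ x in θ₁..θ₂, (y - radialFlux w (x, y))) (𝓝[<] 1) (𝓝 0)) :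
    Tendsto (fun y => ∫ x in x₀..x₁, (y - radialFlux w (x, y))) (𝓝[<] 1) (𝓝 0) := by
  obtain ⟨h₀, h₁⟩ := (Icc_subset_Icc_iff hx₀).1 hx
  refine squeeze_zero' ?_ ?_ flux <;>
    filter_upwards [Ioo_mem_nhdsLT (max_lt hy₀ one_pos)] with y hy
  all_goals
    have nonneg (x) : 0 ≤ y - radialFlux w (x, y) :=
      sub_nonneg.2 (radialFlux_le ((le_max_right _ _).trans hy.1.le))
  · exact intervalIntegral.integral_nonneg_of_forall hx₀ nonneg
  · refine intervalIntegral.integral_mono_interval h₀ hx₀ h₁ (ae_of_all _ nonneg)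
      (ContinuousOn.intervalIntegrable_of_Icc (h₀.trans (hx₀.trans h₁))
        (continuousOn_const.sub (continuousOn_slice (I := Ioo (max y₀ 0) 1) (fun p hp => ?_) hy)))
    obtain ⟨hp₀, hp0⟩ := max_lt_iff.1 hp.2.1
    exact (contDiffAt_radialFlux (hw p ⟨hp.1, hp₀.le, hp.2.2⟩) hp0.ne').continuousAt

lemma exists_barrier_params (ha : a ∈ Ioo θ₁ θ₂) (hy₀ : y₀ < 1) :
    ∃ c k, 0 < c ∧ c ≤ 1 / 2 ∧ 192 ≤ k * c ^ 4 ∧ θ₁ ≤ a - 2 * c ∧ a + 2 * c ≤ θ₂ ∧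
      y₀ ≤ 1 - 1 / k := by
  obtain ⟨c, hc, hc_le⟩ : ∃ c, 0 < c ∧ c ≤ min (1 / 2) (min ((a - θ₁) / 2) ((θ₂ - a) / 2)) :=
    ⟨_, lt_min one_half_pos (lt_min (half_pos (sub_pos.2 ha.1)) (half_pos (sub_pos.2 ha.2))),
      le_rfl⟩
  rw [le_min_iff, le_min_iff] at hc_le
  obtain ⟨hc1, left, right⟩ := hc_le
  refine ⟨c, max (192 / c ^ 4) (1 / (1 - y₀)), hc, hc1,
    (div_le_iff₀ (by positivity)).1 (le_max_left _ _), by linarith, by linarith, ?_⟩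
  rw [le_sub_comm, one_div_le (lt_max_of_lt_left (by positivity)) (sub_pos.2 hy₀)]
  exact le_max_right _ _

theorem tendsto_atTop_of_tendsto_flux_deficit (ha : a ∈ Ioo θ₁ θ₂) (hy₀ : y₀ < 1)
    (hw : ∀ p ∈ Icc θ₁ θ₂ ×ˢ Ico y₀ 1, ContDiffAt ℝ 2 w p)
    (div_le : ∀ p ∈ Icc θ₁ θ₂ ×ˢ Ico y₀ 1, polarFluxDiv w p ≤ p.2)
    (flux : Tendsto (fun y => ∫ x in θ₁..θ₂, (y - radialFlux w (x, y))) (𝓝[<] 1) (𝓝 0)) :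
    Tendsto w (𝓝[{q | q.2 < 1}] (a, 1)) atTop := by
  obtain ⟨c, k, hc, hc1, hk, left, right, hky⟩ := exists_barrier_params ha hy₀
  have k_pos : 0 < k := by linarith [le_of_le_mul_pow_four hc hc1 hk]
  have sub_rect : Icc (a - 2 * c) (a + 2 * c) ×ˢ Ico (1 - 1 / k) 1 ⊆ Icc θ₁ θ₂ ×ˢ Ico y₀ 1 :=
    prod_mono (Icc_subset_Icc left right) (Ico_subset_Ico_left hky)
  obtain ⟨K, hK⟩ := exists_barrier_le hc hc1 hk (fun p hp => hw p (sub_rect hp))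
    (fun p hp => div_le p (sub_rect hp))
    (tendsto_flux_deficit_mono (Icc_subset_Icc left right) (by linarith) hy₀ hw flux)
  have near_base : ∀ᶠ q in 𝓝 (a, (1 : ℝ)),
      q ∈ Ioo (a - 2 * c) (a + 2 * c) ×ˢ Ioi (1 - 1 / k) ∧ 0 < barrierBump a c k q :=
    (Filter.eventually_mem_set.2 (prod_mem_nhds (Ioo_mem_nhds (by linarith) (by linarith))
      (Ioi_mem_nhds (sub_lt_self 1 (one_div_pos.2 k_pos))))).and
      ((contDiff_barrierBump (n := 0)).continuous.continuousAt.eventually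
        (lt_mem_nhds (barrierBump_base_pos k_pos)))
  refine tendsto_atTop_mono' _ ?_ (tendsto_atTop_add_const_right _ (-K)
    (tendsto_barrier (c := c) k_pos))
  filter_upwards [self_mem_nhdsWithin, nhdsWithin_le_nhds near_base] with q hq1 ⟨hq, hφ⟩
  linarith [hK q ⟨hq.1, hq.2, hq1⟩ hφ]

end BlowUp

/-! ### Blow-up along a boundary arc -/

section BoundaryArc

variable {H R a ε₀ y y₀ θ₁ θ₂ : ℝ} {Ω : Set (ℝ × ℝ)} {z₀ P : ℝ × ℝ} {u : ℝ × ℝ → ℝ}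

/-- The integral of `ω_u` along the arc of radius `r` around `z₀` between the angles `θ₁` and
`θ₂`, oriented counterclockwise. -/
def arcIntegral (u : ℝ × ℝ → ℝ) (z₀ : ℝ × ℝ) (r θ₁ θ₂ : ℝ) : ℝ :=
  ∫ θ in θ₁..θ₂,
    (pdx u (z₀ + r • (cos θ, sin θ)) * (r * cos θ)
      - pdy u (z₀ + r • (cos θ, sin θ)) * (-(r * sin θ)))
    / Wgraph u (z₀ + r • (cos θ, sin θ))

lemma arcIntegral_eq_integral_radialFlux (hR : R ≠ 0) (hy : y ≠ 0)
    (hu : ∀ θ ∈ uIcc θ₁ θ₂, DifferentiableAt ℝ u (polarPt z₀ R (θ, y))) :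
    arcIntegral u z₀ (R * y) θ₁ θ₂
      = R * ∫ θ in θ₁..θ₂, radialFlux (polarGraph z₀ R u) (θ, y) := by
  rw [arcIntegral, ← intervalIntegral.integral_const_mul]
  refine intervalIntegral.integral_congr fun θ hθ => ?_
  simp only [radialFlux_polarGraph hR hy (hu θ hθ), fluxX, fluxY, areaFlux, Wgraph, polarPt,
    add_right_comm (1 : ℝ) (pdy u _ ^ 2)]
  ring

lemma tendsto_flux_deficit (hR : 0 < R) (hθ : θ₁ ≤ θ₂) (hy₀ : y₀ < 1)
    (hu : ∀ q ∈ Icc θ₁ θ₂ ×ˢ Ico y₀ 1, ContDiffAt ℝ 2 u (polarPt z₀ R q))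
    (hω : Tendsto (fun ε => arcIntegral u z₀ (R - ε) θ₁ θ₂) (𝓝[>] 0) (𝓝 (R * (θ₂ - θ₁)))) :
    Tendsto (fun y => ∫ x in θ₁..θ₂, (y - radialFlux (polarGraph z₀ R u) (x, y)))
      (𝓝[<] 1) (𝓝 0) := by
  have tendsto_ε : Tendsto (fun y => R * (1 - y)) (𝓝[<] 1) (𝓝[>] 0) :=
    tendsto_nhdsWithin_iff.2
      ⟨((by fun_prop : Continuous fun y => R * (1 - y)).tendsto' 1 0 (by simp)).mono_left
        nhdsWithin_le_nhds,
      eventually_nhdsWithin_of_forall fun y (hy : y < 1) => mul_pos hR (sub_pos.2 hy)⟩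
  have tendsto_length : Tendsto (fun y => (θ₂ - θ₁) * y) (𝓝[<] 1) (𝓝 (θ₂ - θ₁)) :=
    ((continuous_const_mul (θ₂ - θ₁)).tendsto' 1 _ (mul_one _)).mono_left nhdsWithin_le_nhds
  have deficit := tendsto_length.sub ((hω.comp tendsto_ε).div_const R)
  rw [mul_div_cancel_left₀ _ hR.ne', sub_self] at deficit
  refine deficit.congr' ?_
  filter_upwards [Ioo_mem_nhdsLT (max_lt hy₀ one_pos)] with y hy
  have hy0 : y ≠ 0 := ((le_max_right _ _).trans_lt hy.1).ne'
  have hyI : y ∈ Ico y₀ 1 := ⟨(le_max_left _ _).trans hy.1.le, hy.2⟩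
  have flux_cont : ContinuousOn (fun x => radialFlux (polarGraph z₀ R u) (x, y)) (Icc θ₁ θ₂) :=
    continuousOn_slice (I := {y}) (fun q hq => (contDiffAt_radialFlux (contDiffAt_polarGraph
      (hu q ⟨hq.1, hq.2 ▸ hyI⟩)) (hq.2 ▸ hy0)).continuousAt) rfl
  have radius : R - R * (1 - y) = R * y := by ring
  rw [Function.comp_apply, radius, arcIntegral_eq_integral_radialFlux hR.ne' hy0 fun θ h =>
      (hu (θ, y) ⟨uIcc_of_le hθ ▸ h, hyI⟩).differentiableAt two_ne_zero,
    mul_div_cancel_left₀ _ hR.ne', intervalIntegral.integral_sub intervalIntegrable_const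
      (flux_cont.intervalIntegrable_of_Icc hθ), intervalIntegral.integral_const, smul_eq_mul]

lemma nhdsWithin_le_map_polarPt (hR : 0 < R)
    (hext : ∀ᶠ Q in 𝓝[Ω] polarPt z₀ R (a, 1), enorm2 (Q - z₀) < R) :
    𝓝[Ω] polarPt z₀ R (a, 1) ≤ map (polarPt z₀ R) (𝓝[{q | q.2 < 1}] (a, 1)) := by
  intro S hS
  have inside : ∀ᶠ Q in 𝓝 (polarPt z₀ R (a, 1)), enorm2 (Q - z₀) < R → Q ∈ S := by
    rw [← map_polarPt_nhds z₀ hR.ne' (q := (a, 1)) one_ne_zero, eventually_map]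
    filter_upwards [eventually_nhdsWithin_iff.1 (mem_map.1 hS)] with q hq hlt
    rw [enorm2_polarPt_sub] at hlt
    exact hq ((mul_lt_iff_lt_one_right hR).1 (lt_of_abs_lt hlt))
  filter_upwards [hext, nhdsWithin_le_nhds inside] with Q hQ hQS
  exact hQS hQ

theorem tendsto_atTop_of_tendsto_arcIntegral (hR : 0 < R) (hHR : 2 * H * R = 1) (hΩ : IsOpen Ω)
    (hu : IsCMCSolution H Ω u) (ha : a ∈ Ioo θ₁ θ₂) (hy₀ : y₀ < 1)
    (hmem : ∀ q ∈ Icc θ₁ θ₂ ×ˢ Ico y₀ 1, polarPt z₀ R q ∈ Ω)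
    (hext : ∀ᶠ Q in 𝓝[Ω] polarPt z₀ R (a, 1), enorm2 (Q - z₀) < R)
    (hω : Tendsto (fun ε => arcIntegral u z₀ (R - ε) θ₁ θ₂) (𝓝[>] 0) (𝓝 (R * (θ₂ - θ₁)))) :
    Tendsto u (𝓝[Ω] polarPt z₀ R (a, 1)) atTop := by
  have pos_of_mem {q : ℝ × ℝ} (hq : q ∈ Icc θ₁ θ₂ ×ˢ Ico (max y₀ (1 / 2)) 1) : 0 < q.2 :=
    one_half_pos.trans_le ((le_max_right _ _).trans hq.2.1)
  have mem_of_mem {q : ℝ × ℝ} (hq : q ∈ Icc θ₁ θ₂ ×ˢ Ico (max y₀ (1 / 2)) 1) :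
      polarPt z₀ R q ∈ Ω := hmem q ⟨hq.1, (le_max_left _ _).trans hq.2.1, hq.2.2⟩
  have contDiff_u (q) (hq : q ∈ Icc θ₁ θ₂ ×ˢ Ico (max y₀ (1 / 2)) 1) :
      ContDiffAt ℝ 2 u (polarPt z₀ R q) := hu.1.contDiffAt (hΩ.mem_nhds (mem_of_mem hq))
  have hy₁ : max y₀ (1 / 2) < 1 := max_lt hy₀ one_half_lt_one
  have polar : Tendsto (polarGraph z₀ R u) (𝓝[{q | q.2 < 1}] (a, 1)) atTop := by
    refine tendsto_atTop_of_tendsto_flux_deficit ha hy₁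
      (fun q hq => contDiffAt_polarGraph (contDiff_u q hq)) (fun q hq => ?_)
      (tendsto_flux_deficit hR (ha.1.trans ha.2).le hy₁ contDiff_u hω)
    rw [polarFluxDiv_polarGraph hR.ne' (pos_of_mem hq).ne' (contDiff_u q hq),
      planeDiv_flux_of_isCMCSolution hΩ hu (mem_of_mem hq)]
    exact le_of_eq (by linear_combination q.2 * hHR)
  refine Tendsto.mono_left (tendsto_map'_iff.2 ?_) (nhdsWithin_le_map_polarPt hR hext)
  exact (polar.atTop_mul_const hR).congr fun q => div_mul_cancel₀ _ hR.ne'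

lemma smul_sub_polarPt_one (hHR : 2 * H * R = 1) (q : ℝ × ℝ) :
    z₀ + (1 - 2 * H * (R * (1 - q.2))) • (polarPt z₀ R (q.1, 1) - z₀) = polarPt z₀ R q := by
  have radius : 1 - 2 * H * (R * (1 - q.2)) = q.2 := by linear_combination (q.2 - 1) * hHR
  rw [radius, polarPt, polarPt, add_sub_cancel_left, smul_smul, mul_one, mul_comm R]

lemma exists_enorm2_ball {S : Set (ℝ × ℝ)} (hS : ∀ᶠ Q in 𝓝[Ω] P, Q ∈ S) :
    ∃ δ > 0, ∀ Q ∈ Ω, enorm2 (Q - P) < δ → Q ∈ S := by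
  obtain ⟨δ, hδ, ball_subset⟩ := Metric.mem_nhdsWithin_iff.1 hS
  refine ⟨δ, hδ, fun Q hQΩ hQ => ball_subset ⟨?_, hQΩ⟩⟩
  rw [Metric.mem_ball, dist_eq_norm, Prod.norm_def, max_lt_iff]
  exact ⟨(Real.abs_le_sqrt (le_add_of_nonneg_right (sq_nonneg _))).trans_lt hQ,
    (Real.abs_le_sqrt (le_add_of_nonneg_left (sq_nonneg _))).trans_lt hQ⟩

theorem stmt_0_general {C : Set (ℝ × ℝ)} (hH : 0 < H) (hΩ : IsOpen Ω) (hu : IsCMCSolution H Ω u)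
    (hCopen : ∃ U : Set (ℝ × ℝ), IsOpen U ∧
      C = {q : ℝ × ℝ | enorm2 (q - z₀) = 1 / (2 * H)} ∩ U)
    (hext : ∃ V : Set (ℝ × ℝ), IsOpen V ∧ C ⊆ V ∧
      Ω ∩ V ⊆ {q : ℝ × ℝ | enorm2 (q - z₀) < 1 / (2 * H)})
    (hε₀ : 0 < ε₀)
    (hQε : ∀ Q ∈ C, ∀ ε : ℝ, 0 < ε → ε < ε₀ → z₀ + (1 - 2 * H * ε) • (Q - z₀) ∈ Ω)
    (hω : ∀ θ₁ θ₂ : ℝ, θ₁ ≤ θ₂ →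
      (∀ θ ∈ Icc θ₁ θ₂, z₀ + (1 / (2 * H)) • (cos θ, sin θ) ∈ C) →
      Tendsto (fun ε => arcIntegral u z₀ (1 / (2 * H) - ε) θ₁ θ₂) (𝓝[>] 0)
        (𝓝 ((θ₂ - θ₁) / (2 * H))))
    (hP : P ∈ C) : Tendsto u (𝓝[Ω] P) atTop := by
  obtain ⟨U, hU, rfl⟩ := hCopen
  obtain ⟨V, hV, hCV, hVΩ⟩ := hext
  have hHR : 2 * H * (1 / (2 * H)) = 1 := mul_one_div_cancel (by positivity)
  have hR : 0 < 1 / (2 * H) := by positivity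
  obtain ⟨a, rfl⟩ := exists_eq_polarPt_one hP.1
  have slice_cont : Continuous fun θ => polarPt z₀ (1 / (2 * H)) (θ, 1) :=
    (contDiff_polarPt (n := 0) z₀ _).continuous.comp (by fun_prop)
  obtain ⟨θ₁, θ₂, -, nhds_a, arc_U⟩ := exists_Icc_mem_subset_of_mem_nhds
    (slice_cont.continuousAt.preimage_mem_nhds (hU.mem_nhds hP.2))
  have ha := Icc_mem_nhds_iff.1 nhds_a
  have arc (θ) (hθ : θ ∈ Icc θ₁ θ₂) : polarPt z₀ (1 / (2 * H)) (θ, 1) ∈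
      {q : ℝ × ℝ | enorm2 (q - z₀) = 1 / (2 * H)} ∩ U := by
    refine ⟨?_, arc_U hθ⟩
    rw [mem_ofPred_eq, enorm2_polarPt_sub, mul_one, abs_of_pos hR]
  refine tendsto_atTop_of_tendsto_arcIntegral hR hHR hΩ hu ha
    (y₀ := 1 - H * ε₀) (sub_lt_self 1 (by positivity)) (fun q hq => ?_) ?_ ?_
  · rw [← smul_sub_polarPt_one hHR q]
    refine hQε _ (arc q.1 hq.1) _ (mul_pos hR (sub_pos.2 hq.2.2)) ?_
    rw [one_div, inv_mul_lt_iff₀ (by positivity)]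
    nlinarith [hq.2.1]
  · filter_upwards [self_mem_nhdsWithin, mem_nhdsWithin_of_mem_nhds (hV.mem_nhds (hCV hP))]
      with Q hQΩ hQV
    exact hVΩ ⟨hQΩ, hQV⟩
  · rw [one_div_mul_eq_div]
    exact hω θ₁ θ₂ (ha.1.trans ha.2).le fun θ hθ => by
      simpa only [polarPt, mul_one] using arc θ hθ

end BoundaryArc

/-- if `ω_u = ds` along a boundary circle arc `C` of exterior curvature `2H`
(in the sense of convergence of the integrals over the shrunk arcs `T_ε`), then the solution
`u` tends to `+∞` at every point of `C`. -/
theorem stmt_0 (H : ℝ) (hH : 0 < H) (Ω : Set (ℝ × ℝ)) (hΩ : IsOpen Ω)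
    (hΩconn : IsConnected Ω) (u : ℝ × ℝ → ℝ) (hu : IsCMCSolution H Ω u)
    (z₀ : ℝ × ℝ) (C : Set (ℝ × ℝ)) (hCne : C.Nonempty)
    (hCopen : ∃ U : Set (ℝ × ℝ), IsOpen U ∧
      C = {q : ℝ × ℝ | enorm2 (q - z₀) = 1 / (2 * H)} ∩ U)
    (hCbd : C ⊆ frontier Ω)
    (hext : ∃ V : Set (ℝ × ℝ), IsOpen V ∧ C ⊆ V ∧
      Ω ∩ V ⊆ {q : ℝ × ℝ | enorm2 (q - z₀) < 1 / (2 * H)})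
    (ε₀ : ℝ) (hε₀ : 0 < ε₀)
    (hQε : ∀ Q ∈ C, ∀ ε : ℝ, 0 < ε → ε < ε₀ →
      z₀ + (1 - 2 * H * ε) • (Q - z₀) ∈ Ω)
    (hω : ∀ θ₁ θ₂ : ℝ, θ₁ ≤ θ₂ →
      (∀ θ ∈ Set.Icc θ₁ θ₂,
        z₀ + (1 / (2 * H)) • ((Real.cos θ, Real.sin θ) : ℝ × ℝ) ∈ C) →
      Tendsto (fun ε : ℝ =>
        ∫ θ in θ₁..θ₂,
          (pdx u (z₀ + (1 / (2 * H) - ε) • ((Real.cos θ, Real.sin θ) : ℝ × ℝ))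
              * ((1 / (2 * H) - ε) * Real.cos θ)
            - pdy u (z₀ + (1 / (2 * H) - ε) • ((Real.cos θ, Real.sin θ) : ℝ × ℝ))
              * (-((1 / (2 * H) - ε) * Real.sin θ)))
          / Wgraph u (z₀ + (1 / (2 * H) - ε) • ((Real.cos θ, Real.sin θ) : ℝ × ℝ)))
        (nhdsWithin 0 (Set.Ioi 0)) (nhds ((θ₂ - θ₁) / (2 * H)))) :
    ∀ P ∈ C, ∀ M : ℝ, ∃ δ > 0, ∀ Q ∈ Ω, enorm2 (Q - P) < δ → u Q > M := by
  intro P hP M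
  exact exists_enorm2_ball ((stmt_0_general hH hΩ hu hCopen hext hε₀ hQε hω hP).eventually
    (eventually_gt_atTop M))
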